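/- arXiv:1403.5673 — 3 statements merged into one kernel-verified Lean document; each statement's English description precedes it below -/
import Mathlib

section
/- Let F be a field and let R be an F-algebra that is primitive, i.e. R admits a faithful simple left R-module, and suppose R satisfies a nonzero polynomial identity of degree d. Then R is a simple algebra, its center Z is a field, R is finite-dimensional as a Z-vector space, and dim_Z R ≤ ⌊d/2⌋². (Kaplansky's theorem.) -/
/-!
Substituting `x ↦ ∑ j ∉ s, [w j = x] a j` for a longest word `w` of the identity and taking the
alternating sum over `s` annihilates every monomial that is not a rearrangement of `w`. So `R`
satisfies a multilinear identity of some degree `n ≤ d`, which survives extension of scalars.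

Let an algebra satisfying such an identity act on a semisimple module `M` whose endomorphisms are
the scalars from a division ring `K`. If `n / 2 + 1` vectors were independent over `K`, Jacobson
density would provide elements acting on them like the matrix units `e₀₀, e₀₁, e₁₁, e₁₂, …`, whose
product is nonzero in exactly one order. Hence `dim_K M ≤ n / 2`.

With `K = End_R M` this makes `R` the full endomorphism ring of a finite-dimensional space, so `R`
is simple. Now let `L` be a maximal subfield of `End_R M`: the endomorphisms of `M` over `L ⊗ R` are
the scalars from `L`, so `dim_L M ≤ n / 2` as well. By density of `R ⊗ Rᵐᵒᵖ` acting on `R`, elements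
of `R` independent over the center stay independent over `L` in `End_L M`, and therefore
`dim_Z R ≤ (dim_L M) ^ 2`.
-/

universe v

open scoped TensorProduct

/-! ### Multilinear identities -/

/-- The polynomial `∑ σ, c σ • x_{σ 0} ⋯ x_{σ (n - 1)}`, multilinear of degree `n`, is an identity
of `R`. -/
def IsMultilinearIdentity {F : Type*} (R : Type*) [Semiring R] [SMul F R] {n : ℕ}
    (c : Equiv.Perm (Fin n) → F) : Prop :=
  ∀ a : Fin n → R, ∑ σ, c σ • (List.ofFn (a ∘ σ)).prod = 0

section Multilinearization

open Finset

theorem sum_neg_one_pow_card_smul_map_sum_compl {S ι κ N P : Type*} [Fintype ι] [Fintype κ]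
    [DecidableEq ι] [DecidableEq κ] [Semiring S] [AddCommMonoid N] [Module S N] [AddCommGroup P]
    [Module S P] (f : MultilinearMap S (fun _ : κ ↦ N) P) (x : κ → ι → N) :
    ∑ s : Finset ι, (-1 : ℤ) ^ #s • f (fun t ↦ ∑ j ∈ sᶜ, x t j) =
      ∑ φ : κ → ι with φ.Surjective, f fun t ↦ x t (φ t) := by
  let missing (i : ι) : Finset (κ → ι) := {φ | ∀ t, φ t ≠ i}
  have inf_missing (s : Finset ι) : s.inf missing = Fintype.piFinset fun _ ↦ sᶜ := by
    ext φ
    simp only [missing, mem_inf, mem_filter_univ, Fintype.mem_piFinset, mem_compl]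
    grind
  have inf_compl_missing : univ.inf (fun i ↦ (missing i)ᶜ) = ({φ | φ.Surjective} : Finset _) := by
    ext φ
    rw [mem_filter_univ]
    simp [missing, mem_inf, Function.Surjective]
  rw [← inf_compl_missing, inclusion_exclusion_sum_inf_compl, powerset_univ]
  simp only [inf_missing, f.map_sum_finset]

theorem sum_surjective_eq_sum_perm {ι A : Type*} [Fintype ι] [DecidableEq ι] [AddCommMonoid A]
    (g : (ι → ι) → A) : ∑ φ : ι → ι with φ.Surjective, g φ = ∑ σ : Equiv.Perm ι, g σ := by
  symm
  refine sum_bij (fun σ _ ↦ σ) (fun σ _ ↦ by simpa using σ.surjective)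
    (fun σ _ τ _ h ↦ DFunLike.coe_injective h) (fun φ hφ ↦ ?_) fun _ _ ↦ rfl
  exact ⟨.ofBijective φ (Finite.surjective_iff_bijective.1 (mem_filter_univ φ |>.1 hφ)),
    mem_univ _, rfl⟩

variable {R X : Type*} [Ring R]

section Words

variable [DecidableEq X]

theorem sum_neg_one_pow_card_smul_prod_ofFn {ι : Type*} [Fintype ι] [DecidableEq ι] {m : ℕ}
    (w : ι → X) (a : ι → R) (u : Fin m → X) :
    ∑ s : Finset ι, (-1 : ℤ) ^ #s •
        (List.ofFn fun t ↦ ∑ j ∈ sᶜ, if w j = u t then a j else 0).prod =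
      ∑ φ : Fin m → ι with φ.Surjective, if w ∘ φ = u then (List.ofFn (a ∘ φ)).prod else 0 := by
  have polarized := sum_neg_one_pow_card_smul_map_sum_compl (MultilinearMap.mkPiAlgebraFin ℤ m R)
    fun t j ↦ if w j = u t then a j else 0
  simp only [MultilinearMap.mkPiAlgebraFin_apply] at polarized
  rw [polarized]
  refine sum_congr rfl fun φ _ ↦ ?_
  split_ifs with h
  · simp only [← h, Function.comp_apply, if_true]
    rfl
  · obtain ⟨t, ht⟩ := Function.ne_iff.1 h
    exact List.prod_eq_zero ((List.mem_ofFn' _ _).2 ⟨t, if_neg ht⟩)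

theorem sum_neg_one_pow_card_smul_prod_map {n : ℕ} (w : Fin n → X) (a : Fin n → R) (u : List X)
    (hu : u.length ≤ n) :
    ∑ s : Finset (Fin n), (-1 : ℤ) ^ #s •
        (u.map fun x ↦ ∑ j ∈ sᶜ, if w j = x then a j else 0).prod =
      ∑ σ : Equiv.Perm (Fin n),
        if List.ofFn (w ∘ σ) = u then (List.ofFn (a ∘ σ)).prod else 0 := by
  obtain ⟨⟨m, u⟩, rfl⟩ := List.equivSigmaTuple.symm.surjective u
  simp only [List.equivSigmaTuple_symm_apply, List.map_ofFn, List.length_ofFn] at hu ⊢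
  refine (sum_neg_one_pow_card_smul_prod_ofFn w a u).trans ?_
  obtain hlt | rfl := hu.lt_or_eq
  · have not_surjective (φ : Fin m → Fin n) : ¬ φ.Surjective := fun hφ ↦ by
      simpa [hlt.not_ge] using Fintype.card_le_of_surjective φ hφ
    have ofFn_ne (σ : Equiv.Perm (Fin n)) : List.ofFn (w ∘ σ) ≠ List.ofFn u := fun h ↦
      hlt.ne' (by simpa using congrArg List.length h)
    simp [not_surjective, ofFn_ne]
  · simp only [sum_surjective_eq_sum_perm, List.ofFn_injective.eq_iff]

end Words

variable {F : Type*} [CommSemiring F] [Algebra F R]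

theorem isMultilinearIdentity_of_length_le (l : List X →₀ F)
    (hl : ∀ a : X → R, (l.sum fun u r ↦ r • (u.map a).prod) = 0) (w : List X)
    (hw : ∀ u ∈ l.support, u.length ≤ w.length) :
    IsMultilinearIdentity R fun σ : Equiv.Perm (Fin w.length) ↦ l (List.ofFn (w.get ∘ σ)) := by
  classical
  intro a
  calc ∑ σ : Equiv.Perm (Fin w.length),
        l (List.ofFn (w.get ∘ σ)) • (List.ofFn (a ∘ σ)).prod
      = l.sum fun u r ↦ r • ∑ σ : Equiv.Perm (Fin w.length),
          if List.ofFn (w.get ∘ σ) = u then (List.ofFn (a ∘ σ)).prod else 0 := by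
        simp only [Finsupp.sum, smul_sum, smul_ite, smul_zero]
        rw [sum_comm]
        refine sum_congr rfl fun σ _ ↦ ?_
        rw [sum_ite_eq]
        simp +contextual
    _ = l.sum fun u r ↦ r • ∑ s : Finset (Fin w.length), (-1 : ℤ) ^ #s •
          (u.map fun x ↦ ∑ j ∈ sᶜ, if w.get j = x then a j else 0).prod :=
        sum_congr rfl fun u hu ↦
          congrArg (l u • ·) (sum_neg_one_pow_card_smul_prod_map w.get a u (hw u hu)).symm
    _ = ∑ s : Finset (Fin w.length), (-1 : ℤ) ^ #s • l.sum fun u r ↦ r •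
          (u.map fun x ↦ ∑ j ∈ sᶜ, if w.get j = x then a j else 0).prod := by
        simp only [Finsupp.sum, smul_sum, smul_comm (_ : F) (_ : ℤ)]
        exact sum_comm
    _ = 0 := sum_eq_zero fun s _ ↦ by rw [hl, smul_zero]

theorem exists_isMultilinearIdentity_of_lift_eq_zero {d : ℕ} {f : FreeAlgebra F X} (hf : f ≠ 0)
    (hdeg : f ∈ Submodule.span F
      {x | ∃ w : List X, w.length ≤ d ∧ x = (w.map (FreeAlgebra.ι F)).prod})
    (hid : ∀ a : X → R, FreeAlgebra.lift F a f = 0) :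
    ∃ n ≤ d, ∃ c : Equiv.Perm (Fin n) → F, c 1 ≠ 0 ∧ IsMultilinearIdentity R c := by
  have words_eq_image : {x | ∃ w : List X, w.length ≤ d ∧ x = (w.map (FreeAlgebra.ι F)).prod} =
      (fun w : List X ↦ (w.map (FreeAlgebra.ι F)).prod) '' {w | w.length ≤ d} := by
    simp only [Set.image, Set.mem_ofPred_eq, eq_comm]
  rw [words_eq_image, Finsupp.mem_span_image_iff_linearCombination] at hdeg
  obtain ⟨l, hld, rfl⟩ := hdeg
  have eval_eq_zero (a : X → R) : (l.sum fun u r ↦ r • (u.map a).prod) = 0 := by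
    simpa [Finsupp.linearCombination_apply, map_finsuppSum, map_list_prod, Function.comp_def]
      using hid a
  obtain ⟨w, hwl, hw⟩ := l.support.exists_max_image List.length
    (Finsupp.support_nonempty_iff.2 fun h ↦ hf (by rw [h, map_zero]))
  exact ⟨w.length, hld hwl, _, by simpa using hwl,
    isMultilinearIdentity_of_length_le l eval_eq_zero w hw⟩

end Multilinearization

/-! ### The dimension bound from a multilinear identity -/

theorem exists_smul_eq_of_linearIndependent {A K M ι : Type*} [Ring A] [AddCommGroup M] [Module A M]
    [IsSemisimpleModule A M] [DivisionRing K] [Module K M]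
    (hK : ∀ g : Module.End A M, ∃ k : K, ∀ m, g m = k • m) [Finite ι] {v : ι → M}
    (hv : LinearIndependent K v) (y : ι → M) : ∃ a : A, ∀ i, a • v i = y i := by
  obtain ⟨f, hf⟩ := (Finsupp.linearCombination K y ∘ₗ hv.repr).exists_extend
  have hfv (i : ι) : f (v i) = y i := by
    have := LinearMap.congr_fun hf ⟨v i, Submodule.subset_span ⟨i, rfl⟩⟩
    simpa [hv.repr_eq_single i] using this
  let f' : Module.End (Module.End A M) M :=
    { toFun := f
      map_add' := f.map_add
      map_smul' := fun g m ↦ by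
        obtain ⟨k, hk⟩ := hK g
        simp [hk] }
  classical
  obtain ⟨a, ha⟩ := jacobson_density f' (Set.finite_range v).toFinset
  exact ⟨a, fun i ↦ ((ha (v i) (by simp)).symm.trans (hfv i))⟩

theorem prod_map_smul_eq_ite {A M I J : Type*} [DecidableEq J] [Semiring A] [AddCommMonoid M]
    [Module A M] {a : I → A} {v : J → M} {p q : I → J}
    (ha : ∀ i j, a i • v j = if q i = j then v (p i) else 0) (l : List I) (k : J) :
    (l.map a).prod • v k =
      if l.IsChain (q · = p ·) ∧ ∀ t ∈ l.getLast?, q t = k then v ((l.head?.map p).getD k)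
      else 0 := by
  induction l with
  | nil => simp
  | cons i l ih =>
    rw [List.map_cons, List.prod_cons, mul_smul, ih, smul_ite, smul_zero, ha]
    cases l with
    | nil => by_cases h : q i = k <;> simp [h]
    | cons j l =>
      simp only [List.isChain_cons_cons, List.getLast?_cons_cons, List.head?_cons,
        Option.map_some, Option.getD_some]
      by_cases h : q i = p j <;> simp [h]

theorem isChain_ofFn_perm_iff {n : ℕ} (σ : Equiv.Perm (Fin n)) :
    (List.ofFn σ).IsChain (fun s t ↦ (s.val + 1) / 2 = t.val / 2) ↔ σ = 1 := by
  refine ⟨fun h ↦ ?_, ?_⟩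
  · have pairwise_le : (List.ofFn σ).Pairwise (· ≤ ·) :=
      List.isChain_iff_pairwise.1 (h.imp fun s t hst ↦ Fin.le_def.2 (by omega))
    have strictMono : StrictMono σ := Monotone.strictMono_of_injective
      (monotone_iff_forall_lt.2 (List.pairwise_ofFn.1 pairwise_le)) σ.injective
    exact DFunLike.coe_injective ((strictMono.range_inj strictMono_id).1 (by simp))
  · rintro rfl
    simp [List.isChain_ofFn]

theorem prod_ofFn_perm_smul_last {A M : Type*} [Semiring A] [AddCommMonoid M] [Module A M] {n : ℕ}
    {v : Fin (n / 2 + 1) → M} {a : Fin n → A}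
    (ha : ∀ i j, a i • v j = if ⟨(i + 1) / 2, by omega⟩ = j then v ⟨i / 2, by omega⟩ else 0)
    (σ : Equiv.Perm (Fin n)) :
    (List.ofFn (a ∘ σ)).prod • v (Fin.last _) = if σ = 1 then v 0 else 0 := by
  rw [← List.map_ofFn, prod_map_smul_eq_ite ha]
  simp only [Fin.mk.injEq, isChain_ofFn_perm_iff]
  obtain rfl | hσ := eq_or_ne σ 1
  · have last_letter : ∀ t ∈ (List.ofFn (1 : Equiv.Perm (Fin n))).getLast?,
        (⟨(t + 1) / 2, by omega⟩ : Fin (n / 2 + 1)) = Fin.last _ := by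
      cases n with
      | zero => simp
      | succ n =>
        simpa [List.ofFn_succ_last, Fin.ext_iff, -List.ofFn_succ] using fun t ht ↦ by omega
    rw [if_pos ⟨rfl, last_letter⟩, if_pos rfl]
    cases n <;> simp
  · rw [if_neg fun h ↦ hσ h.1, if_neg hσ]

theorem rank_le_half_of_isMultilinearIdentity {F A K M : Type*} [CommSemiring F] [Ring A]
    [Algebra F A] [AddCommGroup M] [Module A M] [IsSemisimpleModule A M] [Module F M]
    [IsScalarTower F A M] [DivisionRing K] [Module K M]
    (hK : ∀ g : Module.End A M, ∃ k : K, ∀ m, g m = k • m) {n : ℕ} {c : Equiv.Perm (Fin n) → F}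
    (hc : IsMultilinearIdentity A c) (hc1 : IsSMulRegular M (c 1)) :
    Module.rank K M ≤ (n / 2 : ℕ) := by
  by_contra! hlt
  obtain ⟨v, hv⟩ : ∃ v : Fin (n / 2 + 1) → M, LinearIndependent K v :=
    Module.le_rank_iff.1 (by simpa using Order.succ_le_of_lt hlt)
  -- `a i` acts on `v` as the matrix unit with row `i / 2` and column `(i + 1) / 2`.
  choose a ha using fun i : Fin n ↦ exists_smul_eq_of_linearIndependent hK hv fun j ↦
    if ⟨(i + 1) / 2, by omega⟩ = j then v ⟨i / 2, by omega⟩ else 0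
  have smul_v_zero : c 1 • v 0 = 0 := by
    simpa [Finset.sum_smul, prod_ofFn_perm_smul_last ha] using congrArg (· • v (Fin.last _)) (hc a)
  exact hv.ne_zero 0 (hc1 (by simpa using smul_v_zero))

/-! ### Faithful simple modules -/

theorem isSMulRegular_of_isSimpleModule {F R M : Type*} [CommSemiring F] [Ring R] [Algebra F R]
    [AddCommGroup M] [Module F M] [Module R M] [IsScalarTower F R M] [IsSimpleModule R M]
    [FaithfulSMul F M] {c : F} (hc : c ≠ 0) : IsSMulRegular M c := by
  have := IsScalarTower.to_smulCommClass (R := F) (A := R) (M := M)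
  obtain h | h := (Module.toModuleEnd R (S := F) M c).bijective_or_eq_zero
  · exact h.injective
  · refine absurd (FaithfulSMul.eq_of_smul_eq_smul (α := M) fun m ↦ ?_) hc
    simpa using congrArg (· m) h

theorem faithfulSMul_of_isScalarTower (F R M : Type*) [CommSemiring F] [Semiring R] [Algebra F R]
    [FaithfulSMul F R] [AddCommMonoid M] [Module F M] [Module R M] [IsScalarTower F R M]
    [FaithfulSMul R M] : FaithfulSMul F M where
  eq_of_smul_eq_smul h := FaithfulSMul.algebraMap_injective F R <|
    FaithfulSMul.eq_of_smul_eq_smul (α := M) fun m ↦ by simpa using h m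

theorem isSimpleRing_end_of_finite (D V : Type*) [DivisionRing D] [AddCommGroup V] [Module D V]
    [Module.Finite D V] [Nontrivial V] : IsSimpleRing (Module.End D V) := by
  classical
  let b := Module.finBasis D V
  have : Nonempty (Fin (Module.finrank D V)) := b.index_nonempty
  have : IsSimpleRing (Module.End D D) := DivisionRing.isSimpleRing _
  exact .of_ringEquiv ((endVecRingEquivMatrixEnd _ _ _).symm.trans b.equivFun.conjRingEquiv.symm)
    inferInstance

theorem isSimpleRing_of_finite_moduleEnd (R M : Type*) [Ring R] [AddCommGroup M] [Module R M]
    [IsSimpleModule R M] [FaithfulSMul R M] [Module.Finite (Module.End R M) M] :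
    IsSimpleRing R := by
  classical
  have : Nontrivial M := IsSimpleModule.nontrivial R M
  have : IsSimpleRing (Module.End (Module.End R M) M) := isSimpleRing_end_of_finite _ _
  exact .of_ringEquiv (RingEquiv.ofBijective (Module.toModuleEnd (Module.End R M) M)
    ⟨fun r s h ↦ FaithfulSMul.eq_of_smul_eq_smul (DFunLike.congr_fun h),
      Module.Finite.toModuleEnd_moduleEnd_surjective⟩).symm inferInstance

theorem isSimpleRing_of_isMultilinearIdentity {F R : Type*} (M : Type*) [CommSemiring F] [Ring R]
    [Algebra F R] [AddCommGroup M] [Module F M] [Module R M] [IsScalarTower F R M]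
    [IsSimpleModule R M] [FaithfulSMul R M] {n : ℕ} {c : Equiv.Perm (Fin n) → F}
    (hc : IsMultilinearIdentity R c) (hc1 : IsSMulRegular M (c 1)) : IsSimpleRing R := by
  classical
  have rank_le : Module.rank (Module.End R M) M ≤ (n / 2 : ℕ) :=
    rank_le_half_of_isMultilinearIdentity (fun g ↦ ⟨g, fun _ ↦ rfl⟩) hc hc1
  have : Module.Finite (Module.End R M) M :=
    Module.rank_lt_aleph0_iff.1 (rank_le.trans_lt Cardinal.natCast_lt_aleph0)
  exact isSimpleRing_of_finite_moduleEnd R M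

/-! ### Extension of scalars to a maximal subfield -/

theorem prod_map_tmul {F A R ι : Type*} [CommSemiring F] [Semiring A] [Algebra F A] [Semiring R]
    [Algebra F R] (l : List ι) (b : ι → A) (r : ι → R) :
    (l.map fun i ↦ b i ⊗ₜ[F] r i).prod = (l.map b).prod ⊗ₜ (l.map r).prod :=
  l.prod_hom₂ (· ⊗ₜ ·) (fun _ _ _ _ ↦ (Algebra.TensorProduct.tmul_mul_tmul ..).symm) rfl b r

theorem IsMultilinearIdentity.tensorProduct {F R : Type*} (A : Type*) [CommSemiring F] [Semiring R]
    [Algebra F R] [CommSemiring A] [Algebra F A] {n : ℕ} {c : Equiv.Perm (Fin n) → F}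
    (hc : IsMultilinearIdentity R c) : IsMultilinearIdentity (A ⊗[F] R) c := by
  let P : MultilinearMap F (fun _ : Fin n ↦ A ⊗[F] R) (A ⊗[F] R) :=
    ∑ σ, c σ • (MultilinearMap.mkPiAlgebraFin F n (A ⊗[F] R)).domDomCongr σ
  have prod_tmul (b : Fin n → A) (r : Fin n → R) (σ : Equiv.Perm (Fin n)) :
      (List.ofFn fun t ↦ b (σ t) ⊗ₜ[F] r (σ t)).prod = (∏ t, b t) ⊗ₜ (List.ofFn (r ∘ σ)).prod := by
    rw [List.ofFn_eq_map, prod_map_tmul, ← List.ofFn_eq_map, List.prod_ofFn, Equiv.prod_comp σ b,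
      ← List.ofFn_eq_map]
    rfl
  suffices P = 0 from fun a ↦ by
    simpa [P, sum_apply, Function.comp_def] using congrArg (· a) this
  refine MultilinearMap.ext_of_span_eq_top (γ := fun _ ↦ A × R) (g := fun _ x ↦ x.1 ⊗ₜ x.2)
    (fun _ ↦ ?_) fun x ↦ ?_
  · simpa [Set.range, Prod.exists] using TensorProduct.span_tmul_eq_top F A R
  · calc P (fun t ↦ (x t).1 ⊗ₜ (x t).2)
        = (∏ t, (x t).1) ⊗ₜ ∑ σ, c σ • (List.ofFn ((fun t ↦ (x t).2) ∘ σ)).prod := by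
          simp [P, prod_tmul (fun t ↦ (x t).1) fun t ↦ (x t).2, TensorProduct.tmul_sum]
      _ = 0 := by rw [hc, TensorProduct.tmul_zero]

theorem exists_subalgebra_centralizer_eq_self (F D : Type*) [CommSemiring F] [Semiring D]
    [Algebra F D] : ∃ L : Subalgebra F D, Subalgebra.centralizer F (L : Set D) = L := by
  obtain ⟨S, hS⟩ := zorn_subset {S : Set D | S ⊆ S.centralizer} fun c hc hchain ↦ by
    refine ⟨⋃₀ c, ?_, fun s ↦ Set.subset_sUnion_of_mem⟩
    rintro x ⟨s, hs, hx⟩ y ⟨t, ht, hy⟩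
    obtain h | h := hchain.total hs ht
    · exact hc ht (h hx) y hy
    · exact hc hs hx y (h hy)
  have centralizer_eq : S.centralizer = S := by
    refine Set.Subset.antisymm (fun x hx ↦ ?_) hS.prop
    refine hS.le_of_ge ?_ (Set.subset_insert x S) (Set.mem_insert x S)
    rintro y (rfl | hy) z (rfl | hz)
    · rfl
    · exact hx z hz
    · exact (hx y hy).symm
    · exact hS.prop hy z hz
  exact ⟨Subalgebra.centralizer F S, SetLike.coe_injective <| by simp [centralizer_eq]⟩

theorem isField_of_centralizer_eq_self {F D : Type*} [CommSemiring F] [DivisionRing D]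
    [Algebra F D] {L : Subalgebra F D} (hL : Subalgebra.centralizer F (L : Set D) = L) :
    IsField L where
  exists_pair_ne := ⟨0, 1, zero_ne_one⟩
  mul_comm x y := Subtype.ext ((Subalgebra.mem_centralizer_iff F).1 (hL.ge y.2) x x.2)
  mul_inv_cancel {x} hx := by
    have inv_mem : (x : D)⁻¹ ∈ L :=
      hL.le (Set.inv_mem_centralizer₀ (SetLike.coe_subset_coe.2 hL.ge x.2))
    exact ⟨⟨x⁻¹, inv_mem⟩, Subtype.ext (mul_inv_cancel₀ (by simpa using hx))⟩

theorem exists_field_eq_centralizer_of_isSimpleModule (F R : Type*) (M : Type v) [CommRing F]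
    [Ring R] [Algebra F R] [AddCommGroup M] [Module F M] [Module R M] [IsScalarTower F R M]
    [IsSimpleModule R M] :
    ∃ (L : Type v) (_ : Field L) (_ : Algebra F L) (_ : Module L M) (_ : IsScalarTower F L M)
      (_ : SMulCommClass L R M), ∀ g : Module.End R M,
        (∀ (l : L) (m : M), g (l • m) = l • g m) → ∃ l : L, ∀ m, g m = l • m := by
  classical
  obtain ⟨L, hL⟩ := exists_subalgebra_centralizer_eq_self F (Module.End R M)
  let _ : Field L := (isField_of_centralizer_eq_self hL).toField
  refine ⟨L, inferInstance, inferInstanceAs (Algebra F L), inferInstanceAs (Module L M),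
    ⟨fun _ _ _ ↦ rfl⟩, ⟨fun l r m ↦ (l : Module.End R M).map_smul r m⟩, fun g hg ↦ ?_⟩
  have g_mem : g ∈ L := hL.le fun l hl ↦ LinearMap.ext fun m ↦ (hg ⟨l, hl⟩ m).symm
  exact ⟨⟨g, g_mem⟩, fun _ ↦ rfl⟩

section TensorProduct

attribute [local instance] TensorProduct.Algebra.module

variable {F A B M : Type*} [CommSemiring F] [Ring A] [Algebra F A] [Ring B] [Algebra F B]
  [AddCommGroup M] [Module F M] [Module A M] [Module B M] [IsScalarTower F A M]
  [IsScalarTower F B M] [SMulCommClass A B M]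

theorem isSimpleModule_tensorProduct [IsSimpleModule B M] : IsSimpleModule (A ⊗[F] B) M := by
  have := IsSimpleModule.nontrivial B M
  refine isSimpleModule_iff_toSpanSingleton_surjective.2 ⟨‹_›, fun m hm y ↦ ?_⟩
  obtain ⟨b, rfl⟩ := IsSimpleModule.toSpanSingleton_surjective B hm y
  exact ⟨1 ⊗ₜ b, by simp [TensorProduct.Algebra.smul_def]⟩

theorem isScalarTower_tensorProduct : IsScalarTower F (A ⊗[F] B) M :=
  .of_algebraMap_smul fun r m ↦ by
    simp [Algebra.TensorProduct.algebraMap_apply, TensorProduct.Algebra.smul_def]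

theorem exists_smul_of_end_tensorProduct
    (h : ∀ g : Module.End B M, (∀ (a : A) (m : M), g (a • m) = a • g m) → ∃ a : A, ∀ m, g m = a • m)
    (g : Module.End (A ⊗[F] B) M) : ∃ a : A, ∀ m, g m = a • m := by
  let g' : Module.End B M :=
    { toFun := g
      map_add' := g.map_add
      map_smul' b m := by simpa [TensorProduct.Algebra.smul_def] using g.map_smul (1 ⊗ₜ b) m }
  have map_smul (a : A) (m : M) : g (a • m) = a • g m := by
    simpa [TensorProduct.Algebra.smul_def] using g.map_smul (a ⊗ₜ 1) m
  exact h g' map_smul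

end TensorProduct

theorem exists_field_rank_le_half {F R : Type*} (M : Type v) [CommRing F] [Ring R] [Algebra F R]
    [AddCommGroup M] [Module F M] [Module R M] [IsScalarTower F R M] [IsSimpleModule R M] {n : ℕ}
    {c : Equiv.Perm (Fin n) → F} (hc : IsMultilinearIdentity R c) (hc1 : IsSMulRegular M (c 1)) :
    ∃ (L : Type v) (_ : Field L) (_ : Module L M) (_ : SMulCommClass R L M),
      Module.rank L M ≤ (n / 2 : ℕ) := by
  obtain ⟨L, _, _, _, _, _, hL⟩ := exists_field_eq_centralizer_of_isSimpleModule F R M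
  let _ : Module (L ⊗[F] R) M := TensorProduct.Algebra.module
  have : IsSimpleModule (L ⊗[F] R) M := isSimpleModule_tensorProduct
  have : IsScalarTower F (L ⊗[F] R) M := isScalarTower_tensorProduct
  exact ⟨L, inferInstance, inferInstance, .symm .., rank_le_half_of_isMultilinearIdentity
    (exists_smul_of_end_tensorProduct hL) (hc.tensorProduct L) hc1⟩

/-! ### Dimension over the center -/

section Center

attribute [local instance] TensorProduct.Algebra.module

section Bimodule

variable {S R : Type*} [CommSemiring S] [Ring R] [Algebra S R]

theorem isSimpleModule_tensorProduct_mop [IsSimpleRing R] :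
    IsSimpleModule (R ⊗[S] Rᵐᵒᵖ) R where
  eq_bot_or_eq_top N := by
    let I : TwoSidedIdeal R := .mk' N N.zero_mem N.add_mem N.neg_mem
      (fun {x _} hy ↦ by
        simpa [TensorProduct.Algebra.smul_def] using N.smul_mem (x ⊗ₜ 1) hy)
      (fun {_ y} hx ↦ by
        simpa [TensorProduct.Algebra.smul_def] using N.smul_mem (1 ⊗ₜ .op y) hx)
    have mem_I (x : R) : x ∈ I ↔ x ∈ N := TwoSidedIdeal.mem_mk' ..
    refine (eq_bot_or_eq_top I).imp (fun h ↦ ?_) fun h ↦ ?_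
    · exact eq_bot_iff.2 fun x hx ↦ (TwoSidedIdeal.mem_bot R).1 (h ▸ (mem_I x).2 hx)
    · exact eq_top_iff.2 fun x _ ↦ (mem_I x).1 (h ▸ trivial)

theorem exists_center_smul_of_end_tensorProduct_mop (g : Module.End (R ⊗[S] Rᵐᵒᵖ) R) :
    ∃ z : Subring.center R, ∀ x, g x = z • x := by
  have map_eq_mul (x : R) : g x = x * g 1 := by
    simpa [TensorProduct.Algebra.smul_def] using g.map_smul (x ⊗ₜ 1) 1
  have map_eq_mul' (x : R) : g x = g 1 * x := by
    simpa [TensorProduct.Algebra.smul_def] using g.map_smul (1 ⊗ₜ .op x) 1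
  exact ⟨⟨g 1, Subring.mem_center_iff.2 fun x ↦ by rw [← map_eq_mul, map_eq_mul']⟩, map_eq_mul'⟩

theorem sum_smul_tensorProduct_smul_eq_zero {L M ι : Type*} [Fintype ι] [Semiring L]
    [AddCommMonoid M] [Module R M] [Module L M] [SMulCommClass L R M] {c : ι → L} {x : ι → R}
    (h : ∀ m : M, ∑ i, c i • x i • m = 0) (t : R ⊗[S] Rᵐᵒᵖ) (m : M) :
    ∑ i, c i • (t • x i) • m = 0 := by
  induction t with
  | zero =>
    have zero_tensor_smul (r : R) : (0 : R ⊗[S] Rᵐᵒᵖ) • r = 0 := zero_smul (R ⊗[S] Rᵐᵒᵖ) r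
    simp [zero_tensor_smul]
  | add t u ht hu => simp [add_smul, Finset.sum_add_distrib, ht, hu]
  | tmul a b =>
    calc ∑ i, c i • ((a ⊗ₜ[S] b) • x i) • m = a • ∑ i, c i • x i • b.unop • m := by
          simp [TensorProduct.Algebra.smul_def, Finset.smul_sum, mul_smul, smul_comm (c _) a]
      _ = 0 := by rw [h, smul_zero]

end Bimodule

theorem linearIndependent_toModuleEnd {R L M ι : Type*} [Ring R] [IsSimpleRing R] [CommRing L]
    [AddCommGroup M] [Module R M] [Module L M] [SMulCommClass R L M] [FaithfulSMul L M]
    [Finite ι] {x : ι → R} (hx : LinearIndependent (Subring.center R) x) :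
    LinearIndependent L fun i ↦ Module.toModuleEnd L (S := R) M (x i) := by
  classical
  have := Fintype.ofFinite ι
  have : SMulCommClass L R M := .symm ..
  let _ : Field (Subring.center R) := (IsSimpleRing.isField_center R).toField
  have : IsSimpleModule (R ⊗[ℤ] Rᵐᵒᵖ) R := isSimpleModule_tensorProduct_mop
  refine Fintype.linearIndependent_iff.2 fun c hc i ↦ ?_
  have sum_smul (m : M) : ∑ j, c j • x j • m = 0 := by
    simpa using congrArg (· m) hc
  obtain ⟨t, ht⟩ := exists_smul_eq_of_linearIndependent (A := R ⊗[ℤ] Rᵐᵒᵖ)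
    exists_center_smul_of_end_tensorProduct_mop hx fun j ↦ if j = i then 1 else 0
  refine FaithfulSMul.eq_of_smul_eq_smul (α := M) fun m ↦ ?_
  calc c i • m = ∑ j, c j • (t • x j) • m := by simp [ht, ite_smul]
    _ = 0 := sum_smul_tensorProduct_smul_eq_zero sum_smul t m
    _ = (0 : L) • m := (zero_smul L m).symm

theorem rank_center_le_finrank_sq {R : Type*} (L M : Type*) [Ring R] [IsSimpleRing R] [Field L]
    [AddCommGroup M] [Nontrivial M] [Module R M] [Module L M] [SMulCommClass R L M]
    [Module.Finite L M] : Module.rank (Subring.center R) R ≤ (Module.finrank L M ^ 2 : ℕ) := by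
  refine rank_le fun s hs ↦ ?_
  calc s.card = Fintype.card s := (Fintype.card_coe s).symm
    _ ≤ Module.finrank L (Module.End L M) :=
      (linearIndependent_toModuleEnd (L := L) (M := M) hs).fintype_card_le_finrank
    _ = Module.finrank L M ^ 2 := by rw [Module.finrank_linearMap, sq]

end Center

theorem kaplansky_primitive_pi_general {F R X : Type*} (M : Type v) [CommRing F] [Ring R]
    [Algebra F R] [FaithfulSMul F R] [AddCommGroup M] [Module R M] [IsSimpleModule R M]
    [FaithfulSMul R M] {d : ℕ} {f : FreeAlgebra F X} (hf : f ≠ 0)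
    (hdeg : f ∈ Submodule.span F
      {x | ∃ w : List X, w.length ≤ d ∧ x = (w.map (FreeAlgebra.ι F)).prod})
    (hid : ∀ a : X → R, FreeAlgebra.lift F a f = 0) :
    IsSimpleRing R ∧ IsField (Subring.center R) ∧
      Module.Finite (Subring.center R) R ∧
      Module.finrank (Subring.center R) R ≤ (d / 2) ^ 2 := by
  have : Nontrivial M := IsSimpleModule.nontrivial R M
  let _ : Module F M := Module.compHom M (algebraMap F R)
  have : IsScalarTower F R M := .of_algebraMap_smul fun _ _ ↦ rfl
  have : FaithfulSMul F M := faithfulSMul_of_isScalarTower F R M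
  obtain ⟨n, hnd, c, hc1, hc⟩ := exists_isMultilinearIdentity_of_lift_eq_zero hf hdeg hid
  replace hc1 : IsSMulRegular M (c 1) := isSMulRegular_of_isSimpleModule (R := R) hc1
  have : IsSimpleRing R := isSimpleRing_of_isMultilinearIdentity M hc hc1
  obtain ⟨L, _, _, _, rank_le⟩ := exists_field_rank_le_half M hc hc1
  have : Module.Finite L M :=
    Module.rank_lt_aleph0_iff.1 (rank_le.trans_lt Cardinal.natCast_lt_aleph0)
  have finrank_le : Module.finrank L M ≤ d / 2 :=
    (Module.finrank_le_of_rank_le rank_le).trans (Nat.div_le_div_right hnd)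
  have rank_center_le := rank_center_le_finrank_sq (R := R) L M
  let _ : Field (Subring.center R) := (IsSimpleRing.isField_center R).toField
  exact ⟨‹_›, IsSimpleRing.isField_center R,
    Module.rank_lt_aleph0_iff.1 (rank_center_le.trans_lt Cardinal.natCast_lt_aleph0),
    (Module.finrank_le_of_rank_le rank_center_le).trans (Nat.pow_le_pow_left finrank_le 2)⟩

/-- **Kaplansky's theorem.** Let `R` be an `F`-algebra admitting a faithful simple left
module (i.e. `R` is primitive) and satisfying a nonzero polynomial identity of degree at
most `d` (an element of the free algebra lying in the span of the words of length `≤ d`).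
Then `R` is a simple ring, its center is a field, and `R` is a finite-dimensional module
over its center of dimension at most `⌊d/2⌋²`. -/
theorem kaplansky_primitive_pi (F : Type*) [Field F] (R : Type*) [Ring R] [Algebra F R]
    (M : Type*) [AddCommGroup M] [Module R M] [IsSimpleModule R M] [FaithfulSMul R M]
    (d : ℕ) (f : FreeAlgebra F ℕ) (hf0 : f ≠ 0)
    (hdeg : f ∈ Submodule.span F
      {x : FreeAlgebra F ℕ | ∃ w : List ℕ, w.length ≤ d ∧ x = (w.map (FreeAlgebra.ι F)).prod})
    (hid : ∀ a : ℕ → R, (FreeAlgebra.lift F a) f = 0) :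
    IsSimpleRing R ∧ IsField (Subring.center R) ∧
      Module.Finite (Subring.center R) R ∧
      Module.finrank (Subring.center R) R ≤ (d / 2) ^ 2 := by
  have : Nontrivial M := IsSimpleModule.nontrivial R M
  have : Nontrivial R := Module.nontrivial R M
  have : FaithfulSMul F R :=
    (faithfulSMul_iff_algebraMap_injective F R).2 (algebraMap F R).injective
  exact kaplansky_primitive_pi_general M hf0 hdeg hid
end

section
/- Let F be a field and let R be a finitely generated associative unital F-algebra. Suppose there is an integer n such that every element r ∈ R is algebraic of degree at most n over F, i.e. satisfies a nonzero polynomial of degree ≤ n with coefficients in F. Then R is finite-dimensional as an F-vector space. (Solution of the bounded Kurosh problem, Jacobson–Kaplansky–Levitzki.) -/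
/-!
Algebraicity of degree at most `n` makes `1, r, …, r ^ n` dependent, so an alternating sum in them
vanishes; linearising it gives a multilinear identity `∑ φ, β φ • x (φ 1) ⋯ x (φ d) = 0` with
`β 1 = 1`, which rewrites `x 1 ⋯ x d` through its rearrangements. By Shirshov's theorem a long word
in the generators contains either an `n`-th power, which algebraicity rewrites through shorter
words, or `d` consecutive factors whose nontrivial rearrangements are all lexicographically smaller,
to which the identity applies. Shortlex being a well-order, finitely many words span.

Shirshov's theorem is obtained by pigeonhole: some word `v` of length `(n + 1) * d` fills `d`
disjoint blocks of a long word. If two of the suffixes `v.drop i`, `i < d`, are prefix-comparable,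
then `v` has a short period and contains an `n`-th power. Otherwise, picking the largest of these
suffixes in the first copy of `v`, the next one in the second copy, and so on, cuts out `d` factors
as required.
-/

namespace Kurosh

section Words

variable {α : Type*}

theorem replicate_flatten_prefix_of_prefix_append {u t : List α} (h : t <+: u ++ t) {n : ℕ}
    (hn : n * u.length ≤ (u ++ t).length) : (List.replicate n u).flatten <+: u ++ t := by
  induction n with
  | zero => exact List.nil_prefix
  | succ n ih =>
    rw [add_one_mul, List.length_append, add_comm u.length, Nat.add_le_add_iff_right] at hn
    have hpow : (List.replicate n u).flatten <+: t :=
      List.prefix_of_prefix_length_le (ih (hn.trans (by simp))) h (by simpa using hn)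
    simpa only [List.replicate_succ, List.flatten_cons, List.prefix_append_right_inj] using hpow

theorem exists_replicate_flatten_infix_of_drop_prefix_drop {v : List α} {i j n : ℕ} (hij : i < j)
    (hn : n * j ≤ v.length) (hj : j ≤ v.length) (h : v.drop j <+: v.drop i) :
    ∃ u ≠ [], (List.replicate n u).flatten <:+: v := by
  obtain ⟨u, hu⟩ : ∃ u, u ++ v.drop j = v.drop i := by
    obtain ⟨k, rfl⟩ := Nat.exists_eq_add_of_le hij.le
    exact ⟨(v.drop i).take k, by rw [← List.drop_drop, List.take_append_drop]⟩
  have hlen : u.length + (v.length - j) = v.length - i := by simpa using congrArg List.length hu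
  refine ⟨u, List.ne_nil_of_length_pos (by omega), ?_⟩
  have hpow : (List.replicate n u).flatten <+: u ++ v.drop j := by
    refine replicate_flatten_prefix_of_prefix_append (hu ▸ h) ?_
    rw [hu, List.length_drop]
    rcases n.eq_zero_or_pos with rfl | hpos
    · simp
    · have hi : i ≤ n * i := Nat.le_mul_of_pos_left i hpos
      have hmul : n * u.length + n * i = n * j := by rw [← mul_add]; congr 1; omega
      omega
  exact (hu ▸ hpow).isInfix.trans (List.drop_suffix i v).isInfix

/-- `DivergesBelow u v` says that `u` and `v` disagree somewhere and that, at the first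
disagreement, `u` has the smaller letter: this is lexicographic order without the case of a proper
prefix, encoded as the stability of `u < v` under arbitrary extension of both words. -/
def DivergesBelow [LT α] (u v : List α) : Prop :=
  ∀ s t : List α, u ++ s < v ++ t

theorem DivergesBelow.ne [Preorder α] {u v : List α} (h : DivergesBelow u v) : u ≠ v := by
  rintro rfl
  exact List.lt_irrefl _ (h [] [])

theorem DivergesBelow.of_prefix [LT α] {u u' v v' : List α} (h : DivergesBelow u v)
    (hu : u <+: u') (hv : v <+: v') : DivergesBelow u' v' := by
  obtain ⟨p, rfl⟩ := hu
  obtain ⟨q, rfl⟩ := hv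
  intro s t
  simpa only [List.append_assoc] using h (p ++ s) (q ++ t)

theorem DivergesBelow.append_left [LT α] {u v : List α} (h : DivergesBelow u v) (p : List α) :
    DivergesBelow (p ++ u) (p ++ v) := by
  intro s t
  simpa only [List.append_assoc] using List.append_left_lt (h s t)

theorem divergesBelow_of_lt_of_not_prefix [LT α] {u v : List α} (hlt : u < v) (h : ¬u <+: v) :
    DivergesBelow u v := by
  intro s t
  induction hlt with
  | nil => exact absurd List.nil_prefix h
  | rel hab => exact List.Lex.rel hab
  | cons _ ih => exact List.Lex.cons (ih (by simpa only [List.prefix_cons_inj] using h))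

/-- A list of words is divided, in Shirshov's sense, if any nontrivial rearrangement of it
concatenates to a lexicographically smaller word. The definition is the sufficient condition that
the words decrease and pairwise diverge; see `IsDivided.divergesBelow_flatten_of_perm`. -/
def IsDivided [LT α] (l : List (List α)) : Prop :=
  l.Pairwise fun u v => DivergesBelow v u

theorem IsDivided.nodup [Preorder α] {l : List (List α)} (h : IsDivided l) : l.Nodup :=
  h.imp fun huv => huv.ne.symm

theorem IsDivided.divergesBelow_flatten_of_perm [LT α] {l l' : List (List α)} (h : IsDivided l)
    (hperm : l'.Perm l) (hne : l' ≠ l) : DivergesBelow l'.flatten l.flatten := by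
  induction h generalizing l' with
  | nil => exact absurd hperm.eq_nil hne
  | @cons u l hu _ ih =>
    obtain _ | ⟨v, l'⟩ := l'
    · exact absurd hperm.symm.eq_nil (List.cons_ne_nil u l)
    · rcases List.mem_cons.1 (hperm.subset List.mem_cons_self) with rfl | hv
      · exact (ih (hperm.cons_inv) fun heq => hne (heq ▸ rfl)).append_left v
      · exact (hu v hv).of_prefix (List.prefix_append _ _) (List.prefix_append _ _)

theorem IsDivided.of_forall₂_prefix [LT α] {l l' : List (List α)}
    (h : List.Forall₂ (· <+: ·) l l') (hl : IsDivided l) : IsDivided l' := by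
  obtain ⟨hlen, hprefix⟩ := List.forall₂_iff_get.1 h
  refine List.pairwise_iff_getElem.2 fun i j hi hj hij => ?_
  have hi' : i < l.length := hlen ▸ hi
  have hj' : j < l.length := hlen ▸ hj
  exact (List.pairwise_iff_getElem.1 hl i j hi' hj' hij).of_prefix
    (hprefix j hj' hj) (hprefix i hi' hi)

theorem exists_forall₂_prefix_of_sublistForall₂_suffix {l b : List (List α)}
    (h : List.SublistForall₂ (· <:+ ·) l b) :
    ∃ l', List.Forall₂ (· <+: ·) l l' ∧ l'.flatten <:+ b.flatten := by
  induction h with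
  | nil => exact ⟨[], .nil, List.nil_suffix⟩
  | @cons u v l b huv _ ih =>
    obtain ⟨l', hl', gap, hgap⟩ := ih
    obtain ⟨p, rfl⟩ := huv
    exact ⟨(u ++ gap) :: l', .cons (List.prefix_append _ _) hl', p, by simp [hgap]⟩
  | @cons_right v l b _ ih =>
    obtain ⟨l', hl', hsuffix⟩ := ih
    exact ⟨l', hl', hsuffix.trans (by simp)⟩

theorem exists_isDivided_of_replicate_sublist [LT α] {l b : List (List α)} {v : List α}
    (hl : IsDivided l) (hv : ∀ u ∈ l, u <:+ v) (hb : (List.replicate l.length v).Sublist b) :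
    ∃ l' : List (List α), l'.length = l.length ∧ IsDivided l' ∧ l'.flatten <:+: b.flatten := by
  have hsuffix : List.Forall₂ (· <:+ ·) l (List.replicate l.length v) :=
    List.forall₂_iff_get.2 ⟨by simp, fun i hi _ => by simpa using hv _ (List.getElem_mem hi)⟩
  obtain ⟨l', hll', hinfix⟩ :=
    exists_forall₂_prefix_of_sublistForall₂_suffix (List.sublistForall₂_iff.2 ⟨_, hsuffix, hb⟩)
  exact ⟨l', hll'.length_eq.symm, hl.of_forall₂_prefix hll', hinfix.isInfix⟩

theorem exists_isDivided_suffixes [LinearOrder α] {v : List α} {d : ℕ} (hd : d ≤ v.length)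
    (h : ∀ i j, i < j → j < d → ¬v.drop j <+: v.drop i) :
    ∃ l : List (List α), l.length = d ∧ IsDivided l ∧ ∀ u ∈ l, u <:+ v := by
  have hnot_prefix : ∀ i < d, ∀ j < d, v.drop i <+: v.drop j → i = j := by
    intro i hi j hj hij
    have hlen : v.length - i ≤ v.length - j := by simpa only [List.length_drop] using hij.length_le
    have hle : j ≤ i := by omega
    exact hle.eq_or_lt.elim Eq.symm fun hlt => absurd hij (h j i hlt hi)
  let S : Finset (List α) := (Finset.range d).image v.drop
  have hcard : S.card = d := by
    rw [Finset.card_image_of_injOn, Finset.card_range]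
    intro i hi j hj hij
    refine hnot_prefix i (Finset.mem_range.1 hi) j (Finset.mem_range.1 hj) ?_
    rw [show v.drop i = v.drop j from hij]
  have hmem : ∀ u ∈ S.sort (· ≥ ·), ∃ i < d, v.drop i = u := by simp [S]
  refine ⟨S.sort (· ≥ ·), by rw [Finset.length_sort, hcard], ?_, fun u hu => ?_⟩
  · refine S.sortedGT_sort.pairwise.imp_of_mem fun {u w} hu hw hlt => ?_
    obtain ⟨i, hi, rfl⟩ := hmem u hu
    obtain ⟨j, hj, rfl⟩ := hmem w hw
    refine divergesBelow_of_lt_of_not_prefix hlt fun hprefix => hlt.ne ?_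
    rw [hnot_prefix j hj i hi hprefix]
  · obtain ⟨i, -, rfl⟩ := hmem u hu
    exact List.drop_suffix i v

theorem exists_flatten_prefix_of_mul_le_length {m k : ℕ} {w : List α} (h : k * m ≤ w.length) :
    ∃ b : List (List α), b.length = k ∧ (∀ v ∈ b, v.length = m) ∧ b.flatten <+: w := by
  have hlen : (w.take (k * m)).length = (List.replicate k m).sum := by simpa using h
  refine ⟨(List.replicate k m).splitLengths (w.take (k * m)), by simp, fun v hv => ?_, ?_⟩
  · have hmap := List.map_splitLengths_length _ _ hlen.ge
    exact (List.mem_replicate.1 (hmap ▸ List.mem_map_of_mem hv)).2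
  · rw [List.flatten_splitLengths _ _ hlen.le]
    exact List.take_prefix _ _

theorem exists_replicate_sublist_of_card_mul_lt_length {S : Finset α} {b : List α} {d : ℕ}
    (hS : ∀ v ∈ b, v ∈ S) (h : S.card * d < b.length) :
    ∃ v ∈ b, (List.replicate d v).Sublist b := by
  classical
  have hsum : ∑ _ ∈ b.toFinset, d < ∑ v ∈ b.toFinset, b.count v := by
    rw [List.sum_toFinset_count_eq_length, Finset.sum_const, smul_eq_mul]
    refine lt_of_le_of_lt (Nat.mul_le_mul_right d (Finset.card_le_card fun v hv => ?_)) h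
    exact hS v (List.mem_toFinset.1 hv)
  obtain ⟨v, hv, hlt⟩ := Finset.exists_lt_of_sum_lt hsum
  exact ⟨v, List.mem_toFinset.1 hv, List.replicate_sublist_iff.2 hlt.le⟩

theorem exists_pow_infix_or_isDivided_infix (α : Type*) [LinearOrder α] [Finite α] (n d : ℕ) :
    ∃ N : ℕ, ∀ w : List α, N ≤ w.length →
      (∃ u ≠ [], (List.replicate n u).flatten <:+: w) ∨
      ∃ l : List (List α), l.length = d ∧ IsDivided l ∧ l.flatten <:+: w := by
  let m := (n + 1) * d
  let S : Finset (List α) := (List.finite_length_eq α m).toFinset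
  refine ⟨(S.card * d + 1) * m, fun w hw => ?_⟩
  obtain ⟨b, hblen, hbm, hbw⟩ := exists_flatten_prefix_of_mul_le_length hw
  obtain ⟨v, hvb, hrep⟩ := exists_replicate_sublist_of_card_mul_lt_length (S := S) (d := d)
    (fun v hv => by simpa [S] using hbm v hv) (by omega)
  have hvm : v.length = n * d + d := (hbm v hvb).trans (add_one_mul n d)
  have hvw : v <:+: w := (List.infix_of_mem_flatten hvb).trans hbw.isInfix
  by_cases hper : ∃ i j, i < j ∧ j < d ∧ v.drop j <+: v.drop i
  · obtain ⟨i, j, hij, hj, hprefix⟩ := hper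
    have hnj : n * j ≤ n * d := Nat.mul_le_mul_left n hj.le
    obtain ⟨u, hu, huv⟩ := exists_replicate_flatten_infix_of_drop_prefix_drop (n := n) hij
      (by omega) (by omega) hprefix
    exact Or.inl ⟨u, hu, huv.trans hvw⟩
  · push Not at hper
    obtain ⟨l, rfl, hl, hlv⟩ := exists_isDivided_suffixes (by omega) hper
    obtain ⟨l', hlen, hl', hinfix⟩ := exists_isDivided_of_replicate_sublist hl hlv hrep
    exact Or.inr ⟨l', hlen, hl', hinfix.trans hbw.isInfix⟩

end Words

section MultilinearIdentity

theorem eq_zero_of_forall_sum_powerset_eq_zero {ι M : Type*} [AddCommMonoid M]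
    {G : Finset ι → M} (h : ∀ T : Finset ι, ∑ U ∈ T.powerset, G U = 0) (T : Finset ι) :
    G T = 0 := by
  induction T using Finset.strongInduction with
  | H T ih =>
    rw [← h T, Finset.sum_eq_single_of_mem T (Finset.mem_powerset_self T)]
    intro U hU hne
    exact ih U ((Finset.mem_powerset.1 hU).ssubset_of_ne hne)

theorem sum_perm_eq_zero_of_forall_sum_piFinset_eq_zero {ι M : Type*} [Fintype ι] [DecidableEq ι]
    [AddCommMonoid M] {g : (ι → ι) → M}
    (h : ∀ T : Finset ι, ∑ φ ∈ Fintype.piFinset (fun _ : ι => T), g φ = 0) :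
    ∑ φ : Equiv.Perm ι, g φ = 0 := by
  have himage : ∀ T : Finset ι, ∑ φ : ι → ι with Finset.univ.image φ = T, g φ = 0 := by
    refine eq_zero_of_forall_sum_powerset_eq_zero fun T => ?_
    rw [← h T, ← Finset.sum_fiberwise_of_maps_to (s := Fintype.piFinset fun _ => T)
      (g := fun φ => Finset.univ.image φ) (t := T.powerset) (by simp [Finset.image_subset_iff])]
    refine Finset.sum_congr rfl fun U hU => Finset.sum_congr ?_ fun _ _ => rfl
    ext φ
    have hφ : Finset.univ.image φ = U → ∀ i, φ i ∈ T := by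
      rintro rfl i
      exact Finset.mem_powerset.1 hU (Finset.mem_image_of_mem φ (Finset.mem_univ i))
    simpa using hφ
  rw [← himage Finset.univ]
  refine Finset.sum_bij (fun φ _ => ⇑φ) (fun φ _ => ?_)
    (fun _ _ _ _ heq => DFunLike.coe_injective heq) (fun φ hφ => ?_) fun _ _ => rfl
  · simp
  · have hsurj : Function.Surjective φ := fun i => by
      simpa using Finset.eq_univ_iff_forall.1 (Finset.mem_filter.1 hφ).2 i
    exact ⟨.ofBijective φ (Finite.surjective_iff_bijective.1 hsurj), Finset.mem_univ _, rfl⟩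

/-- The algebra `R` satisfies the multilinear identity `∑ φ, β φ • x (φ 0) ⋯ x (φ (d - 1)) = 0`. -/
def IsMultilinearIdentity {A : Type*} (R : Type*) [CommSemiring A] [Semiring R] [Algebra A R]
    {d : ℕ} (β : Equiv.Perm (Fin d) → A) : Prop :=
  ∀ x : Fin d → R, ∑ φ, β φ • (List.ofFn (x ∘ φ)).prod = 0

/-- Linearisation: a homogeneous noncommutative polynomial of degree `d` in the variables `X`
is given by its coefficients `a` on words. -/
theorem isMultilinearIdentity_of_forall_sum_words_eq_zero {A R X : Type*} [CommSemiring A]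
    [Semiring R] [Algebra A R] [Fintype X] {d : ℕ} {a : (Fin d → X) → A}
    (h : ∀ z : X → R, ∑ w, a w • (List.ofFn (z ∘ w)).prod = 0) (κ : Fin d → X) :
    IsMultilinearIdentity R fun φ : Equiv.Perm (Fin d) => a (κ ∘ φ) := by
  classical
  intro x
  refine sum_perm_eq_zero_of_forall_sum_piFinset_eq_zero
    (g := fun φ => a (κ ∘ φ) • (List.ofFn (x ∘ φ)).prod) fun T => ?_
  rw [← h fun v => ∑ j ∈ T with κ j = v, x j, ← Finset.sum_fiberwise _ fun φ => κ ∘ φ]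
  refine Finset.sum_congr rfl fun w _ => ?_
  have hfiber : ({φ ∈ Fintype.piFinset fun _ => T | κ ∘ φ = w} : Finset (Fin d → Fin d)) =
      Fintype.piFinset fun i => {j ∈ T | κ j = w i} := by
    ext φ
    simp [funext_iff, forall_and]
  have hexpand := (MultilinearMap.mkPiAlgebraFin A d R).map_sum_finset (fun _ => x)
    fun i => {j ∈ T | κ j = w i}
  simp only [MultilinearMap.mkPiAlgebraFin_apply] at hexpand
  rw [Function.comp_def, hexpand, Finset.smul_sum, hfiber]
  refine Finset.sum_congr rfl fun φ hφ => ?_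
  have hφw : κ ∘ φ = w := funext fun i => (Finset.mem_filter.1 (Fintype.mem_piFinset.1 hφ i)).2
  rw [← hφw]
  rfl

/-- The word `x ^ k₀ y x ^ k₁ y ⋯` attached to the exponents `k₀, k₁, …`, with `x = false` and
`y = true`. -/
def exponentWord (l : List ℕ) : List Bool :=
  l.flatMap fun k => List.replicate k false ++ [true]

theorem exponentWord_cons (k : ℕ) (l : List ℕ) :
    exponentWord (k :: l) = List.replicate k false ++ true :: exponentWord l := by
  simp [exponentWord]

theorem length_exponentWord (l : List ℕ) : (exponentWord l).length = l.sum + l.length := by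
  simp [exponentWord, List.length_flatMap, List.sum_map_add]

theorem prod_map_exponentWord {R : Type*} [Monoid R] (z : Bool → R) (l : List ℕ) :
    ((exponentWord l).map z).prod = (l.map fun k => z false ^ k * z true).prod := by
  induction l with
  | nil => rfl
  | cons k l ih => simp [exponentWord_cons, ih, mul_assoc]

theorem exponentWord_injective : Function.Injective exponentWord
  | [], [], _ => rfl
  | [], k :: m, h => by simp [exponentWord] at h
  | k :: l, [], h => by simp [exponentWord] at h
  | k :: l, j :: m, h => by
    rw [exponentWord_cons, exponentWord_cons] at h
    have hkj : k = j := by simpa [List.idxOf_append] using congrArg (List.idxOf true) h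
    subst hkj
    rw [exponentWord_injective (List.cons.inj (List.append_cancel_left h)).2]

theorem alternatingMap_eq_zero_of_mem_span_image {A M N ι : Type*} [CommRing A] [AddCommGroup M]
    [Module A M] [AddCommGroup N] [Module A N] (f : M [⋀^ι]→ₗ[A] N) {v : ι → M} {i : ι}
    (h : v i ∈ Submodule.span A (v '' {i}ᶜ)) : f v = 0 := by
  classical
  have hker : Submodule.span A (v '' {i}ᶜ) ≤
      LinearMap.ker (f.toMultilinearMap.toLinearMap v i) := by
    rw [Submodule.span_le]
    rintro _ ⟨j, hj, rfl⟩
    exact f.map_update_self v (Ne.symm hj)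
  simpa using hker h

section Capelli

variable {A R : Type*} [CommRing A] [Ring R] [Algebra A R] {n : ℕ}

theorem sum_sign_smul_prod_pow_mul_eq_zero {r : R}
    (hr : r ^ n ∈ Submodule.span A ((r ^ ·) '' Set.Iio n)) (y : R) :
    ∑ τ : Equiv.Perm (Fin (n + 1)), ((Equiv.Perm.sign τ : ℤ) : A) •
      (List.ofFn fun i => r ^ (τ i : ℕ) * y).prod = 0 := by
  let f : R [⋀^Fin (n + 1)]→ₗ[A] R := MultilinearMap.alternatization
    ((MultilinearMap.mkPiAlgebraFin A (n + 1) R).compLinearMap fun _ => LinearMap.mulRight A y)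
  have hf : f (fun i => r ^ (i : ℕ)) = 0 := by
    refine alternatingMap_eq_zero_of_mem_span_image f (i := Fin.last n) (Submodule.span_mono ?_ hr)
    rintro _ ⟨i, hi, rfl⟩
    exact ⟨⟨i, (Set.mem_Iio.1 hi).trans n.lt_succ_self⟩, fun h => hi.ne (congrArg Fin.val h), rfl⟩
  rw [← hf, MultilinearMap.alternatization_apply]
  refine Finset.sum_congr rfl fun τ _ => ?_
  rw [Int.cast_smul_eq_zsmul, Units.smul_def]
  rfl

theorem exists_isMultilinearIdentity_of_pow_mem_span
    (h : ∀ r : R, r ^ n ∈ Submodule.span A ((r ^ ·) '' Set.Iio n)) :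
    ∃ (d : ℕ) (β : Equiv.Perm (Fin d) → A), β 1 = 1 ∧ IsMultilinearIdentity R β := by
  let word (τ : Equiv.Perm (Fin (n + 1))) : List Bool :=
    exponentWord (List.ofFn fun i => (τ i : ℕ))
  have hword : Function.Injective word := fun σ τ hστ => Equiv.ext fun i =>
    Fin.ext (congrFun (List.ofFn_injective (exponentWord_injective hστ)) i)
  have hlen : ∀ τ, (word τ).length = (word 1).length := fun τ => by
    simp only [word, length_exponentWord, List.length_ofFn, List.sum_ofFn]
    rw [Equiv.sum_comp τ fun i => (i : ℕ)]
    rfl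
  have hofFn : ∀ τ, ∃ c : Fin (word 1).length → Bool, List.ofFn c = word τ := fun τ => by
    rw [← hlen τ]
    exact ⟨(word τ).get, List.ofFn_get _⟩
  choose c hc using hofFn
  have hcinj : Function.Injective c := fun σ τ hστ =>
    hword ((hc σ).symm.trans ((congrArg List.ofFn hστ).trans (hc τ)))
  let a (w : Fin (word 1).length → Bool) : A :=
    ∑ τ, if c τ = w then ((Equiv.Perm.sign τ : ℤ) : A) else 0
  refine ⟨(word 1).length, fun φ => a (c 1 ∘ φ), ?_,
    isMultilinearIdentity_of_forall_sum_words_eq_zero (a := a) (fun z => ?_) (c 1)⟩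
  · simp [a, hcinj.eq_iff]
  · rw [← sum_sign_smul_prod_pow_mul_eq_zero (h (z false)) (z true)]
    simp only [a, Finset.sum_smul, ite_smul, zero_smul]
    rw [Finset.sum_comm]
    simp only [Finset.sum_ite_eq, Finset.mem_univ, if_true]
    refine Finset.sum_congr rfl fun τ _ => ?_
    rw [← List.map_ofFn, hc, prod_map_exponentWord, List.map_ofFn]
    rfl

end Capelli

end MultilinearIdentity

section Spanning

variable {A R ι : Type*} [CommSemiring A] [Semiring R] [Algebra A R]

/-- The submodule spanned by the values at `g` of the words in `S`, a word `[i₀, i₁, …]` having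
the value `g i₀ * g i₁ * ⋯`. -/
def wordSpan (A : Type*) [CommSemiring A] [Algebra A R] (g : ι → R) (S : Set (List ι)) :
    Submodule A R :=
  Submodule.span A ((fun w => (w.map g).prod) '' S)

theorem prod_mem_wordSpan (g : ι → R) {S : Set (List ι)} {w : List ι} (hw : w ∈ S) :
    (w.map g).prod ∈ wordSpan A g S :=
  Submodule.subset_span ⟨w, hw, rfl⟩

theorem prod_mem_wordSpan_of_pow_infix {n : ℕ} (g : ι → R) {u w : List ι} (hu : u ≠ [])
    (hpow : (u.map g).prod ^ n ∈ Submodule.span A (((u.map g).prod ^ ·) '' Set.Iio n))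
    (h : (List.replicate n u).flatten <:+: w) :
    (w.map g).prod ∈ wordSpan A g {w' | w'.length < w.length} := by
  obtain ⟨s, t, rfl⟩ := h
  have hprod : ∀ i, ((s ++ (List.replicate i u).flatten ++ t).map g).prod =
      LinearMap.mulLeftRight A ((s.map g).prod, (t.map g).prod) ((u.map g).prod ^ i) := by
    simp [List.map_flatten, List.prod_flatten, mul_assoc]
  rw [hprod]
  refine Submodule.span_mono ?_ (Submodule.apply_mem_span_image_of_mem_span _ hpow)
  rintro _ ⟨_, ⟨i, hi, rfl⟩, rfl⟩
  refine ⟨s ++ (List.replicate i u).flatten ++ t, ?_, hprod i⟩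
  have hlt : i * u.length < n * u.length :=
    Nat.mul_lt_mul_of_pos_right hi (List.length_pos_iff.2 hu)
  simpa using hlt

theorem wordSpan_univ (g : ι → R) :
    wordSpan A g Set.univ = Subalgebra.toSubmodule (Algebra.adjoin A (Set.range g)) := by
  have hlift : (fun w => (w.map g).prod) = FreeMonoid.lift g :=
    funext fun w => (FreeMonoid.lift_apply g w).symm
  rw [Algebra.adjoin_eq_span, ← FreeMonoid.mrange_lift, MonoidHom.coe_mrange, ← hlift, wordSpan,
    Set.image_univ]
  rfl

theorem finite_of_forall_prod_mem_wordSpan_length_lt [Finite ι] {g : ι → R}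
    (hg : Algebra.adjoin A (Set.range g) = ⊤) {N : ℕ}
    (h : ∀ w : List ι, (w.map g).prod ∈ wordSpan A g {w' | w'.length < N}) :
    Module.Finite A R := by
  have htop : wordSpan A g {w | w.length < N} = ⊤ := by
    rw [eq_top_iff, ← Algebra.top_toSubmodule, ← hg, ← wordSpan_univ]
    refine Submodule.span_le.2 ?_
    rintro _ ⟨w, -, rfl⟩
    exact h w
  exact ⟨htop ▸ Submodule.fg_span ((List.finite_length_lt ι N).image _)⟩

end Spanning

section Rewriting

variable {A R ι : Type*} [CommRing A] [Ring R] [Algebra A R]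

theorem prod_mem_wordSpan_of_isDivided_infix [Preorder ι] (g : ι → R) {l : List (List ι)}
    {w : List ι} {β : Equiv.Perm (Fin l.length) → A} (hβ₁ : IsUnit (β 1))
    (hβ : IsMultilinearIdentity R β) (hl : IsDivided l) (h : l.flatten <:+: w) :
    (w.map g).prod ∈ wordSpan A g {w' | List.Shortlex (· < ·) w' w} := by
  obtain ⟨s, t, rfl⟩ := h
  let rearranged (φ : Equiv.Perm (Fin l.length)) : List ι :=
    s ++ (List.ofFn (l.get ∘ φ)).flatten ++ t
  have hprod : ∀ φ, ((rearranged φ).map g).prod =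
      LinearMap.mulLeftRight A ((s.map g).prod, (t.map g).prod)
        (List.ofFn ((fun i => ((l.get i).map g).prod) ∘ φ)).prod := by
    intro φ
    simp [rearranged, List.map_flatten, List.prod_flatten, Function.comp_def, mul_assoc]
  have hsum : ∑ φ, β φ • ((rearranged φ).map g).prod = 0 := by
    simp only [hprod, ← map_smul, ← map_sum]
    rw [hβ, map_zero]
  have hlt : ∀ φ ≠ 1, List.Shortlex (· < ·) (rearranged φ) (s ++ l.flatten ++ t) := by
    intro φ hφ
    have hperm : (List.ofFn (l.get ∘ φ)).Perm l := by
      simpa using Equiv.Perm.ofFn_comp_perm φ l.get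
    have hne : List.ofFn (l.get ∘ φ) ≠ l := fun heq => hφ <| Equiv.ext fun i =>
      List.nodup_iff_injective_get.1 hl.nodup
        (congrFun (List.ofFn_injective (heq.trans (List.ofFn_get l).symm)) i)
    refine List.Shortlex.of_lex (by simp [rearranged, hperm.flatten.length_eq]) ?_
    exact (hl.divergesBelow_flatten_of_perm hperm hne).append_left s t t
  have hone : rearranged 1 = s ++ l.flatten ++ t := by simp [rearranged]
  rw [← Finset.add_sum_erase _ _ (Finset.mem_univ 1), hone] at hsum
  rw [← Submodule.smul_mem_iff_of_isUnit _ hβ₁, eq_neg_of_add_eq_zero_left hsum]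
  refine Submodule.neg_mem _ (Submodule.sum_mem _ fun φ hφ => Submodule.smul_mem _ _ ?_)
  exact prod_mem_wordSpan g (hlt φ (Finset.ne_of_mem_erase hφ))

theorem exists_forall_prod_mem_wordSpan_length_lt [Finite ι] (g : ι → R) {n d : ℕ}
    {β : Equiv.Perm (Fin d) → A} (hβ₁ : IsUnit (β 1)) (hβ : IsMultilinearIdentity R β)
    (hpow : ∀ u : List ι,
      (u.map g).prod ^ n ∈ Submodule.span A (((u.map g).prod ^ ·) '' Set.Iio n)) :
    ∃ N : ℕ, ∀ w : List ι, (w.map g).prod ∈ wordSpan A g {w' | w'.length < N} := by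
  let _ : LinearOrder ι := IsWellOrder.linearOrder WellOrderingRel
  obtain ⟨N, hN⟩ := exists_pow_infix_or_isDivided_infix ι n d
  refine ⟨N, fun w => ?_⟩
  induction w using (List.Shortlex.wf (wellFounded_lt (α := ι))).induction with
  | h w ih =>
    rcases lt_or_ge w.length N with hw | hw
    · exact prod_mem_wordSpan g hw
    have hle : wordSpan A g {w' | List.Shortlex (· < ·) w' w} ≤
        wordSpan A g {w' | w'.length < N} := by
      refine Submodule.span_le.2 ?_
      rintro _ ⟨w', hw', rfl⟩
      exact ih w' hw'
    refine hle ?_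
    rcases hN w hw with ⟨u, hu, huw⟩ | ⟨l, rfl, hl, hlw⟩
    · exact Submodule.span_mono (Set.image_mono fun w' => List.Shortlex.of_length_lt)
        (prod_mem_wordSpan_of_pow_infix g hu (hpow u) huw)
    · exact prod_mem_wordSpan_of_isDivided_infix g hβ₁ hβ hl hlw

end Rewriting

theorem pow_mem_span_of_monic {A R : Type*} [CommRing A] [Ring R] [Algebra A R] {r : R} {n : ℕ}
    {p : Polynomial A} (hp : p.Monic) (hn : p.natDegree ≤ n) (hr : Polynomial.aeval r p = 0) :
    r ^ n ∈ Submodule.span A ((r ^ ·) '' Set.Iio n) := by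
  obtain ⟨k, rfl⟩ := Nat.exists_eq_add_of_le hn
  rw [hp.as_sum] at hr
  simp only [map_add, map_pow, Polynomial.aeval_X, map_sum, map_mul, Polynomial.aeval_C] at hr
  rw [pow_add, eq_neg_of_add_eq_zero_left hr, neg_mul, Finset.sum_mul]
  refine Submodule.neg_mem _ (Submodule.sum_mem _ fun i hi => ?_)
  rw [mul_assoc, ← pow_add, ← Algebra.smul_def]
  refine Submodule.smul_mem _ _ (Submodule.subset_span ⟨i + k, ?_, rfl⟩)
  exact Nat.add_lt_add_right (Finset.mem_range.1 hi) k

end Kurosh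

open Kurosh in
theorem bounded_kurosh_general {A R : Type*} [CommRing A] [Ring R] [Algebra A R]
    [Algebra.FiniteType A R] (n : ℕ)
    (hint : ∀ r : R, ∃ p : Polynomial A, p.Monic ∧ p.natDegree ≤ n ∧ Polynomial.aeval r p = 0) :
    Module.Finite A R := by
  obtain ⟨S, hS⟩ := Algebra.FiniteType.out (R := A) (A := R)
  have hg : Algebra.adjoin A (Set.range ((↑) : S → R)) = ⊤ := by
    rw [Subtype.range_coe]
    exact hS
  have hpow (r : R) : r ^ n ∈ Submodule.span A ((r ^ ·) '' Set.Iio n) := by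
    obtain ⟨p, hp, hn, hr⟩ := hint r
    exact pow_mem_span_of_monic hp hn hr
  obtain ⟨d, β, hβ₁, hβ⟩ := exists_isMultilinearIdentity_of_pow_mem_span hpow
  obtain ⟨N, hN⟩ := exists_forall_prod_mem_wordSpan_length_lt ((↑) : S → R)
    (hβ₁ ▸ isUnit_one) hβ fun u => hpow _
  exact finite_of_forall_prod_mem_wordSpan_length_lt hg hN

/-- **Solution of the bounded Kurosh problem (Jacobson–Kaplansky–Levitzki).**
A finitely generated associative unital algebra `R` over a field `F` in which every element
is algebraic of degree at most `n` over `F` is finite dimensional over `F`. -/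
theorem bounded_kurosh (F : Type*) [Field F] (R : Type*) [Ring R] [Algebra F R]
    (hfg : Algebra.FiniteType F R) (n : ℕ)
    (halg : ∀ r : R, ∃ p : Polynomial F, p ≠ 0 ∧ p.natDegree ≤ n ∧ Polynomial.aeval r p = 0) :
    FiniteDimensional F R := by
  refine bounded_kurosh_general (A := F) n fun r => ?_
  obtain ⟨p, hp, hn, hr⟩ := halg r
  exact ⟨p * Polynomial.C p.leadingCoeff⁻¹, Polynomial.monic_mul_leadingCoeff_inv hp,
    (Polynomial.natDegree_mul_leadingCoeff_inv p hp).trans_le hn, by simp [hr]⟩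
end

section
/- Let F be a field and let A and B be F-algebras each of which satisfies a nonzero polynomial identity. Then the tensor product A ⊗_F B also satisfies a nonzero polynomial identity. (Regev's theorem.) -/
open scoped TensorProduct

/-- An `F`-algebra `R` satisfies the nonzero polynomial identity `f` (an element of the free
associative algebra on countably many noncommuting variables) if every substitution of the
variables by elements of `R` annihilates `f`. -/
def SatisfiesNonzeroPI (F : Type*) [Field F] (R : Type*) [Ring R] [Algebra F R] : Prop :=
  ∃ f : FreeAlgebra F ℕ, f ≠ 0 ∧ ∀ a : ℕ → R, (FreeAlgebra.lift F a) f = 0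

/-!
Write `c_n(A)` for the dimension of the space of multilinear polynomials in `x_1, …, x_n` modulo
the identities of `A`. A multilinear identity of degree `d` rewrites a monomial whose word has a
decreasing subsequence of length `d` in terms of lexicographically smaller ones (Latyshev), and
the words without such a subsequence number at most `d ^ (2 * n)`, so `c_n(A)` grows at most
exponentially. Since `c_n(A ⊗ B) ≤ c_n(A) * c_n(B)`, this is eventually less than `n!`, and then
the `n!` multilinear monomials are linearly dependent modulo the identities of `A ⊗ B`.
-/

namespace Regev

open Equiv Module

section Monomials

/-- The multilinear monomial `x_{σ 0} ⋯ x_{σ (n-1)}`, as a function on `A ^ n`. -/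
def permMonomial (R A : Type*) [CommSemiring R] [Semiring A] [Algebra R A] {n : ℕ}
    (σ : Perm (Fin n)) : MultilinearMap R (fun _ : Fin n => A) A :=
  (MultilinearMap.mkPiAlgebraFin R n A).domDomCongr σ

lemma permMonomial_apply (R : Type*) {A : Type*} [CommSemiring R] [Semiring A] [Algebra R A]
    {n : ℕ} (σ : Perm (Fin n)) (x : Fin n → A) :
    permMonomial R A σ x = (List.ofFn (x ∘ σ)).prod := rfl

/-- The `n`-th codimension `c_n(A)`: the rank of the multilinear polynomials of degree `n` modulo
the identities of `A`, encoded as the span of the functions that the monomials define on `A`. -/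
noncomputable def codimension (R A : Type*) [CommSemiring R] [Semiring A] [Algebra R A]
    (n : ℕ) : ℕ :=
  (Set.range (permMonomial R A (n := n))).finrank R

lemma lift_basisFreeMonoid {R X A : Type*} [CommSemiring R] [Semiring A] [Algebra R A]
    (a : X → A) (u : FreeMonoid X) :
    FreeAlgebra.lift R a (FreeAlgebra.basisFreeMonoid R X u) = (u.toList.map a).prod := by
  simp [FreeAlgebra.basisFreeMonoid, FreeAlgebra.equivMonoidAlgebraFreeMonoid,
    FreeMonoid.lift_apply, map_list_prod, Function.comp_def]

lemma lift_eq_sum_repr {R X A : Type*} [CommSemiring R] [Semiring A] [Algebra R A]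
    (a : X → A) (f : FreeAlgebra R X) :
    FreeAlgebra.lift R a f = ((FreeAlgebra.basisFreeMonoid R X).repr f).sum
      fun u r => r • (u.toList.map a).prod := by
  conv_lhs => rw [← (FreeAlgebra.basisFreeMonoid R X).linearCombination_repr f]
  simp only [Finsupp.linearCombination_apply, map_finsuppSum, map_smul, lift_basisFreeMonoid]

end Monomials

section Multilinearization

open Finset

lemma sum_neg_one_pow_card_smul_prod {ι A : Type*} [Fintype ι] [DecidableEq ι] [Ring A]
    (a : ι → A) (l : List ι) :
    ∑ U : Finset ι, (-1 : ℤ) ^ #U • (l.map fun j => if j ∈ U then 0 else a j).prod =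
      if l.toFinset = univ then (l.map a).prod else 0 := by
  have prod_eq : ∀ U : Finset ι, (l.map fun j => if j ∈ U then 0 else a j).prod =
      if U ⊆ l.toFinsetᶜ then (l.map a).prod else 0 := by
    intro U
    split_ifs with hU
    · refine congrArg _ (List.map_congr_left fun j hj => if_neg fun hjU => ?_)
      simpa [hj] using hU hjU
    · obtain ⟨j, hjU, hj⟩ := not_subset.1 hU
      exact List.prod_eq_zero (List.mem_map.2 ⟨j, by simpa using hj, if_pos hjU⟩)
  simp only [prod_eq, smul_ite, smul_zero]
  rw [← sum_filter, filter_subset_univ, ← sum_smul, sum_powerset_neg_one_pow_card]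
  simp only [compl_eq_empty_iff, ite_smul, one_smul, zero_smul]

lemma prod_map_sum_fiber {ι X A : Type*} [Fintype ι] [DecidableEq X] [Semiring A]
    {m : ℕ} (w : ι → X) (b : ι → A) (v : Fin m → X) :
    ((List.ofFn v).map fun x => ∑ j with w j = x, b j).prod =
      ∑ g : Fin m → ι with w ∘ g = v, ((List.ofFn g).map b).prod := by
  classical
  have fiber : ({g | w ∘ g = v} : Finset (Fin m → ι)) =
      Fintype.piFinset fun k => ({j | w j = v k} : Finset ι) := by
    ext g
    simp [funext_iff]
  simp only [fiber, List.map_ofFn]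
  exact (MultilinearMap.mkPiAlgebraFin ℕ m A).map_sum_finset (fun _ => b) _

lemma sum_neg_one_pow_card_smul_prod_fiber {X A : Type*} [DecidableEq X] [Ring A] {d : ℕ}
    (w : Fin d → X) (a : Fin d → A) {u : List X} (hu : u.length ≤ d) :
    ∑ U : Finset (Fin d), (-1 : ℤ) ^ #U •
        (u.map fun x => ∑ j with w j = x, if j ∈ U then 0 else a j).prod =
      ∑ σ : Perm (Fin d), if List.ofFn (w ∘ σ) = u then (List.ofFn (a ∘ σ)).prod else 0 := by
  obtain ⟨m, v, rfl⟩ : ∃ (m : ℕ) (v : Fin m → X), u = List.ofFn v :=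
    ⟨u.length, u.get, (List.ofFn_get u).symm⟩
  rw [List.length_ofFn] at hu
  have surjective_iff : ∀ g : Fin m → Fin d,
      (List.ofFn g).toFinset = univ ↔ Function.Surjective g := fun g => by
    simp [eq_univ_iff_forall, Function.Surjective]
  simp only [prod_map_sum_fiber, smul_sum]
  rw [sum_comm]
  simp only [sum_neg_one_pow_card_smul_prod, surjective_iff]
  simp only [List.map_ofFn]
  rw [← sum_filter, filter_filter, ← sum_filter]
  rcases hu.lt_or_eq with hlt | rfl
  · rw [sum_eq_zero, sum_eq_zero]
    · intro σ hσ
      exact absurd (congrArg List.length (mem_filter.1 hσ).2) (by simpa using hlt.ne')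
    · intro g hg
      have hcard := Fintype.card_le_of_surjective g (mem_filter.1 hg).2.2
      exact absurd hcard (by simpa using hlt)
  · symm
    refine sum_bij (fun σ _ => ⇑σ) ?_ ?_ ?_ ?_
    · intro σ hσ
      simpa [σ.surjective, List.ofFn_inj] using hσ
    · exact fun σ _ τ _ h => Equiv.coe_fn_injective h
    · intro g hg
      simp only [mem_filter_univ] at hg
      exact ⟨Equiv.ofBijective g (Finite.surjective_iff_bijective.1 hg.2),
        by simpa using congrArg List.ofFn hg.1, rfl⟩
    · exact fun _ _ => rfl

-- Substitute `∑ a j`, over the `j` with `w j = x`, for each variable `x`: by inclusion–exclusion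
-- over the `j` for which `a j` is replaced by `0`, only the words `w ∘ σ` survive.
lemma sum_repr_smul_permMonomial_eq_zero {R X A : Type*} [CommRing R] [Ring A] [Algebra R A]
    {f : FreeAlgebra R X} (hA : ∀ a : X → A, FreeAlgebra.lift R a f = 0) {d : ℕ}
    (hd : ∀ u ∈ ((FreeAlgebra.basisFreeMonoid R X).repr f).support, u.length ≤ d)
    (w : Fin d → X) :
    ∑ σ : Perm (Fin d), (FreeAlgebra.basisFreeMonoid R X).repr f (.ofList (List.ofFn (w ∘ σ))) •
      permMonomial R A σ = 0 := by
  classical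
  let c : FreeMonoid X →₀ R := (FreeAlgebra.basisFreeMonoid R X).repr f
  ext a
  let subst (U : Finset (Fin d)) (x : X) : A := ∑ j with w j = x, if j ∈ U then 0 else a j
  have polarized : ∀ u ∈ c.support,
      ∑ U : Finset (Fin d), (-1 : ℤ) ^ #U • (u.toList.map (subst U)).prod =
        ∑ σ : Perm (Fin d), if .ofList (List.ofFn (w ∘ σ)) = u then permMonomial R A σ a else 0 :=
    fun u hu => (sum_neg_one_pow_card_smul_prod_fiber w a (hd u hu)).trans
      (sum_congr rfl fun σ _ => if_congr Iff.rfl rfl rfl)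
  symm
  calc 0 = ∑ U : Finset (Fin d), (-1 : ℤ) ^ #U • FreeAlgebra.lift R (subst U) f := by
        simp only [hA, smul_zero, sum_const_zero]
    _ = ∑ u ∈ c.support, c u • ∑ U : Finset (Fin d),
          (-1 : ℤ) ^ #U • (u.toList.map (subst U)).prod := by
        simp only [lift_eq_sum_repr, Finsupp.sum, smul_sum]
        rw [sum_comm]
        simp only [smul_comm (_ : ℤ) (_ : R), c]
    _ = ∑ u ∈ c.support, ∑ σ : Perm (Fin d),
          if .ofList (List.ofFn (w ∘ σ)) = u then c u • permMonomial R A σ a else 0 := by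
        refine sum_congr rfl fun u hu => ?_
        simp only [polarized u hu, smul_sum, smul_ite, smul_zero]
    _ = ∑ σ : Perm (Fin d), c (.ofList (List.ofFn (w ∘ σ))) • permMonomial R A σ a := by
        rw [sum_comm]
        refine sum_congr rfl fun σ _ => ?_
        rw [sum_ite_eq]
        split_ifs with h
        · rfl
        · rw [Finsupp.notMem_support_iff.1 h, zero_smul]
    _ = (∑ σ : Perm (Fin d), c (.ofList (List.ofFn (w ∘ σ))) • permMonomial R A σ) a := by
        simp only [_root_.sum_apply, smul_apply]

theorem exists_multilinear_identity {R X A : Type*} [CommRing R] [Ring A] [Algebra R A]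
    {f : FreeAlgebra R X} (hf : f ≠ 0) (hA : ∀ a : X → A, FreeAlgebra.lift R a f = 0) :
    ∃ (d : ℕ) (γ : Perm (Fin d) → R), γ 1 ≠ 0 ∧ ∑ σ, γ σ • permMonomial R A σ = 0 := by
  obtain ⟨u, hu, hmax⟩ := exists_max_image ((FreeAlgebra.basisFreeMonoid R X).repr f).support
    FreeMonoid.length (by simpa using hf)
  obtain ⟨d, w, rfl⟩ : ∃ (d : ℕ) (w : Fin d → X), u = .ofList (List.ofFn w) :=
    ⟨u.length, u.toList.get, (List.ofFn_get u.toList).symm⟩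
  have hd : ∀ u ∈ ((FreeAlgebra.basisFreeMonoid R X).repr f).support, u.length ≤ d :=
    fun u hu => (hmax u hu).trans_eq List.length_ofFn
  refine ⟨d, fun σ => (FreeAlgebra.basisFreeMonoid R X).repr f (.ofList (List.ofFn (w ∘ σ))), ?_,
    sum_repr_smul_permMonomial_eq_zero hA hd w⟩
  simpa using hu

end Multilinearization

section DecreasingSubsequences

open Finset

variable {ι α : Type*} [LinearOrder ι]

/-- `f` has no strictly decreasing subsequence of length `d`. -/
def AvoidsDecreasing [Preorder α] (d : ℕ) (f : ι → α) : Prop :=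
  ∀ t : Finset ι, StrictAntiOn f t → #t < d

open Classical in
/-- The largest number of terms after the `i`-th in a strictly decreasing subsequence of `f` that
starts at `i`; the term at `i` itself is not counted. -/
noncomputable def descentRank [Fintype ι] [Preorder α] (f : ι → α) (i : ι) : ℕ :=
  ({t | (∀ j ∈ t, i < j) ∧ StrictAntiOn f (insert i t : Finset ι)} : Finset (Finset ι)).sup card

open Classical in
lemma exists_card_eq_descentRank [Fintype ι] [Preorder α] (f : ι → α) (i : ι) :
    ∃ t : Finset ι, (∀ j ∈ t, i < j) ∧ StrictAntiOn f (insert i t : Finset ι) ∧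
      #t = descentRank f i := by
  obtain ⟨t, ht, hcard⟩ := exists_mem_eq_sup
    ({t | (∀ j ∈ t, i < j) ∧ StrictAntiOn f (insert i t : Finset ι)} : Finset (Finset ι))
    ⟨∅, by simp⟩ card
  obtain ⟨hlt, hanti⟩ := (mem_filter_univ t).1 ht
  exact ⟨t, hlt, hanti, hcard.symm⟩

open Classical in
lemma card_le_descentRank [Fintype ι] [Preorder α] {f : ι → α} {i : ι} {t : Finset ι}
    (hlt : ∀ j ∈ t, i < j) (hanti : StrictAntiOn f (insert i t : Finset ι)) :
    #t ≤ descentRank f i :=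
  le_sup (f := card) ((mem_filter_univ t).2 ⟨hlt, hanti⟩)

lemma AvoidsDecreasing.descentRank_lt [Fintype ι] [Preorder α] {d : ℕ} {f : ι → α}
    (hf : AvoidsDecreasing d f) (i : ι) : descentRank f i < d := by
  obtain ⟨t, hlt, hanti, hcard⟩ := exists_card_eq_descentRank f i
  have hi : i ∉ t := fun hi => (hlt i hi).false
  have := hf _ hanti
  rw [card_insert_of_notMem hi] at this
  omega

lemma descentRank_lt_descentRank [Fintype ι] [Preorder α] {f : ι → α} {i j : ι} (hij : i < j)
    (hf : f j < f i) : descentRank f j < descentRank f i := by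
  obtain ⟨t, hlt, hanti, hcard⟩ := exists_card_eq_descentRank f j
  have hj : j ∉ t := fun hj => (hlt j hj).false
  have hi : ∀ k ∈ insert j t, i < k ∧ f k < f i := by
    intro k hk
    rcases mem_insert.1 hk with rfl | hkt
    · exact ⟨hij, hf⟩
    · exact ⟨hij.trans (hlt k hkt), (hanti (by simp) (by simp [hkt]) (hlt k hkt)).trans hf⟩
  rw [← hcard, ← Nat.add_one_le_iff, ← card_insert_of_notMem hj]
  refine card_le_descentRank (fun k hk => (hi k hk).1) ?_
  rw [coe_insert, strictAntiOn_insert_iff_of_forall_ge fun k hk => (hi k hk).1.le]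
  exact ⟨fun k hk _ => (hi k hk).2, hanti⟩

lemma lt_of_descentRank_eq [Fintype ι] [LinearOrder α] {f : ι → α}
    (hf : Function.Injective f) {i j : ι} (hij : i < j) (h : descentRank f i = descentRank f j) :
    f i < f j :=
  (hf.ne hij.ne).lt_of_le <| not_lt.1 fun hji => (descentRank_lt_descentRank hij hji).ne' h

lemma eq_of_comp_symm_eq {κ : Type*} [WellFoundedLT ι] [LinearOrder α] {σ τ : ι ≃ α} {r : ι → κ}
    (hσ : ∀ i j, i < j → r i = r j → σ i < σ j) (hτ : ∀ i j, i < j → r i = r j → τ i < τ j)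
    (h : r ∘ σ.symm = r ∘ τ.symm) : σ = τ := by
  have not_lt_of_agree : ∀ {σ τ : ι ≃ α} {i : ι}, (∀ i j, i < j → r i = r j → τ i < τ j) →
      r ∘ σ.symm = r ∘ τ.symm → (∀ j < i, σ j = τ j) → ¬ σ i < τ i := by
    intro σ τ i hτ h hagree hlt
    obtain ⟨j, hj⟩ := τ.surjective (σ i)
    have hr : r i = r j := by simpa [τ.symm_apply_eq.2 hj.symm] using congrFun h (σ i)
    rcases lt_trichotomy i j with hij | rfl | hji
    · exact (hlt.trans (hτ i j hij hr)).ne hj.symm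
    · exact hlt.ne hj.symm
    · exact hji.ne (σ.injective ((hagree j hji).trans hj))
  ext i
  induction i using WellFoundedLT.induction with
  | ind i agree =>
    exact le_antisymm (not_lt.1 (not_lt_of_agree hσ h.symm fun j hj => (agree j hj).symm))
      (not_lt.1 (not_lt_of_agree hτ h agree))

-- A permutation increases on each class of positions of equal rank, so it can be recovered from
-- the rank at each position and the rank of the position of each value.
lemma card_avoidsDecreasing_le (ι : Type*) [LinearOrder ι] [Fintype ι] (d : ℕ) :
    Nat.card {σ : Perm ι // AvoidsDecreasing d σ} ≤ (d ^ 2) ^ Fintype.card ι := by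
  let rank (σ : {σ : Perm ι // AvoidsDecreasing d σ}) (i : ι) : Fin d :=
    ⟨descentRank σ.1 i, σ.2.descentRank_lt i⟩
  have increasing : ∀ σ i j, i < j → rank σ i = rank σ j → σ.1 i < σ.1 j := fun σ i j hij h =>
    lt_of_descentRank_eq σ.1.injective hij (congrArg Fin.val h)
  have hinj : Function.Injective fun σ => (rank σ, rank σ ∘ σ.1.symm) := by
    intro σ τ h
    obtain ⟨hrank, hcolor⟩ := Prod.mk.inj h
    refine Subtype.ext (eq_of_comp_symm_eq (increasing σ) ?_ (by rw [hcolor, hrank]))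
    simpa only [hrank] using increasing τ
  calc Nat.card {σ : Perm ι // AvoidsDecreasing d σ}
      ≤ Nat.card ((ι → Fin d) × (ι → Fin d)) := Nat.card_le_card_of_injective _ hinj
    _ = (d ^ 2) ^ Fintype.card ι := by simp [← mul_pow, sq]

end DecreasingSubsequences

section Words

open List

variable {α : Type*}

lemma exists_decreasing_sublist [Preorder α] {n d : ℕ} {w : Fin n → α}
    (hw : ¬ AvoidsDecreasing d w) :
    ∃ s, s <+ ofFn w ∧ s.Pairwise (· > ·) ∧ s.length = d := by
  simp only [AvoidsDecreasing, not_forall, not_lt] at hw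
  obtain ⟨t, hanti, hd⟩ := hw
  obtain ⟨t, hsub, rfl⟩ := Finset.exists_subset_card_eq hd
  refine ⟨((finRange n).filter (· ∈ t)).map w, ?_, ?_, ?_⟩
  · rw [ofFn_eq_map]
    exact filter_sublist.map w
  · rw [pairwise_map]
    refine ((pairwise_lt_finRange n).filter _).imp_of_mem fun hi hj hij => ?_
    exact hanti (hsub (by simpa using hi)) (hsub (by simpa using hj)) hij
  · have : ((finRange n).filter (· ∈ t)).toFinset = t := by ext; simp
    rw [length_map, ← toFinset_card_of_nodup ((nodup_finRange n).filter _), this]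

/-- The concatenation of a list of nonempty words, each encoded as its first letter and the
remaining ones. -/
def concatBlocks (bs : List (α × List α)) : List α :=
  (bs.map fun b => b.1 :: b.2).flatten

lemma exists_eq_append_concatBlocks_of_sublist {s l : List α} (h : s <+ l) :
    ∃ p bs, bs.map Prod.fst = s ∧ l = p ++ concatBlocks bs := by
  induction h with
  | slnil => exact ⟨[], [], rfl, rfl⟩
  | cons x _ ih =>
    obtain ⟨p, bs, hs, hl⟩ := ih
    exact ⟨x :: p, bs, hs, by rw [hl, cons_append]⟩
  | cons_cons x _ ih =>
    obtain ⟨p, bs, hs, hl⟩ := ih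
    exact ⟨[], (x, p) :: bs, by rw [map_cons, hs], by simp [hl, concatBlocks]⟩

lemma concatBlocks_lt_of_perm [LT α] : ∀ {bs bs' : List (α × List α)},
    bs.Pairwise (fun b c => c.1 < b.1) → bs' ~ bs → bs' ≠ bs →
      concatBlocks bs' < concatBlocks bs
  | [], _, _, hperm, hne => absurd hperm.eq_nil hne
  | _ :: _, [], _, hperm, _ => absurd hperm.symm.eq_nil (cons_ne_nil _ _)
  | b :: bs, b' :: bs', hdec, hperm, hne => by
    obtain ⟨hb, hbs⟩ := pairwise_cons.1 hdec
    by_cases h : b' = b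
    · subst h
      have := concatBlocks_lt_of_perm hbs ((perm_cons b').1 hperm) (by simpa using hne)
      simpa only [concatBlocks, map_cons, flatten_cons] using append_left_lt this
    · have hmem : b' ∈ bs := mem_of_ne_of_mem h (hperm.subset mem_cons_self)
      exact cons_lt_cons_iff.2 (Or.inl (hb b' hmem))

lemma exists_blocks_permute_lt [Preorder α] {n d : ℕ} {w : Fin n → α}
    (hw : ¬ AvoidsDecreasing d w) :
    ∃ (p : List α) (q : Fin d → List α), p ++ (ofFn q).flatten = ofFn w ∧
      ∀ σ : Perm (Fin d), σ ≠ 1 → p ++ (ofFn (q ∘ σ)).flatten < ofFn w := by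
  obtain ⟨s, hsub, hdec, hlen⟩ := exists_decreasing_sublist hw
  obtain ⟨p, bs, rfl, hp⟩ := exists_eq_append_concatBlocks_of_sublist hsub
  rw [length_map] at hlen
  obtain ⟨B, rfl⟩ : ∃ B : Fin d → α × List α, bs = ofFn B := by
    subst hlen; exact ⟨bs.get, (ofFn_get bs).symm⟩
  rw [pairwise_map] at hdec
  have hB : Function.Injective B :=
    nodup_ofFn.1 (hdec.imp fun hlt heq => hlt.ne (congrArg Prod.fst heq).symm)
  have concat_eq : ∀ σ : Perm (Fin d), (ofFn ((fun i => (B i).1 :: (B i).2) ∘ σ)).flatten =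
      concatBlocks (ofFn (B ∘ σ)) := fun σ => by rw [concatBlocks, map_ofFn]; rfl
  refine ⟨p, fun i => (B i).1 :: (B i).2, hp ▸ congrArg (p ++ ·) (concat_eq 1), fun σ hσ => ?_⟩
  rw [hp, concat_eq]
  refine append_left_lt (concatBlocks_lt_of_perm hdec (σ.ofFn_comp_perm B) fun h => hσ ?_)
  exact Equiv.ext fun i => hB (congrFun (ofFn_injective h) i)

end Words

section CodimensionGrowth

open List

lemma exists_ofFn_eq_of_perm {n : ℕ} {l : List (Fin n)} (hl : l ~ finRange n) :
    ∃ σ : Perm (Fin n), ofFn σ = l := by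
  obtain ⟨m, f, rfl⟩ : ∃ (m : ℕ) (f : Fin m → Fin n), l = ofFn f :=
    ⟨l.length, l.get, (ofFn_get l).symm⟩
  obtain rfl : m = n := by simpa using hl.length_eq
  have hf : Function.Injective f := nodup_ofFn.1 (hl.nodup_iff.2 (nodup_finRange m))
  exact ⟨Equiv.ofBijective f (Finite.injective_iff_bijective.1 hf), rfl⟩

lemma sum_smul_prod_map_append_flatten {R A ι : Type*} [CommSemiring R] [Semiring A]
    [Algebra R A] {d : ℕ} {γ : Perm (Fin d) → R} (hγ : ∑ σ, γ σ • permMonomial R A σ = 0)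
    (p : List ι) (q : Fin d → List ι) (x : ι → A) :
    ∑ σ, γ σ • ((p ++ (ofFn (q ∘ σ)).flatten).map x).prod = 0 := by
  have hq := DFunLike.congr_fun hγ fun i => ((q i).map x).prod
  simp only [sum_apply, smul_apply, zero_apply, permMonomial_apply] at hq
  simp only [map_append, prod_append, map_flatten, prod_flatten, map_ofFn, ← mul_smul_comm,
    ← Finset.mul_sum]
  rw [← mul_zero (map x p).prod, ← hq]
  rfl

lemma exists_smaller_permMonomials {R A : Type*} [CommSemiring R] [Semiring A] [Algebra R A]
    {d n : ℕ} {γ : Perm (Fin d) → R} (hγ : ∑ ρ, γ ρ • permMonomial R A ρ = 0) {σ : Perm (Fin n)}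
    (hσ : ¬ AvoidsDecreasing d σ) :
    ∃ τ : Perm (Fin d) → Perm (Fin n), τ 1 = σ ∧ (∀ ρ ≠ 1, ofFn (τ ρ) < ofFn σ) ∧
      ∑ ρ, γ ρ • permMonomial R A (τ ρ) = 0 := by
  obtain ⟨p, q, hone, hlt⟩ := exists_blocks_permute_lt hσ
  have hperm : ∀ ρ : Perm (Fin d), p ++ (ofFn (q ∘ ρ)).flatten ~ finRange n := fun ρ =>
    calc p ++ (ofFn (q ∘ ρ)).flatten
        ~ p ++ (ofFn q).flatten := (ρ.ofFn_comp_perm q).flatten.append_left p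
      _ = (finRange n).map σ := by rw [hone, ofFn_eq_map]
      _ ~ finRange n := σ.map_finRange_perm
  choose τ hτ using fun ρ => exists_ofFn_eq_of_perm (hperm ρ)
  refine ⟨τ, ?_, fun ρ hρ => (hτ ρ).symm ▸ hlt ρ hρ, ?_⟩
  · exact Equiv.coe_fn_injective (ofFn_injective ((hτ 1).trans hone))
  · ext x
    have := sum_smul_prod_map_append_flatten hγ p q x
    simpa only [sum_apply, smul_apply, zero_apply, permMonomial_apply, ← map_ofFn, hτ] using this

theorem permMonomial_mem_span_avoidsDecreasing {R A : Type*} [CommRing R] [Ring A] [Algebra R A]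
    {d : ℕ} {γ : Perm (Fin d) → R} (hunit : IsUnit (γ 1)) (hγ : ∑ ρ, γ ρ • permMonomial R A ρ = 0)
    {n : ℕ} (σ : Perm (Fin n)) :
    permMonomial R A σ ∈ Submodule.span R
      (Set.range fun τ : {τ : Perm (Fin n) // AvoidsDecreasing d τ} => permMonomial R A τ.1) := by
  have wf : WellFounded (Function.onFun (· < ·) fun σ : Perm (Fin n) => ofFn σ) :=
    Set.wellFoundedOn_range.1 (Set.finite_range _).wellFoundedOn
  induction σ using wf.induction with
  | _ σ ih =>
    by_cases hσ : AvoidsDecreasing d σ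
    · exact Submodule.subset_span ⟨⟨σ, hσ⟩, rfl⟩
    obtain ⟨τ, hone, hlt, hsum⟩ := exists_smaller_permMonomials hγ hσ
    rw [← Finset.add_sum_erase _ _ (Finset.mem_univ 1), hone] at hsum
    rw [← Submodule.smul_mem_iff_of_isUnit _ hunit, eq_neg_of_add_eq_zero_left hsum]
    exact neg_mem (sum_mem fun ρ hρ =>
      Submodule.smul_mem _ _ (ih _ (hlt ρ (Finset.ne_of_mem_erase hρ))))

theorem codimension_le_pow {R A : Type*} [CommRing R] [Nontrivial R] [Ring A] [Algebra R A]
    {d : ℕ} {γ : Perm (Fin d) → R} (hunit : IsUnit (γ 1)) (hγ : ∑ ρ, γ ρ • permMonomial R A ρ = 0)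
    (n : ℕ) : codimension R A n ≤ (d ^ 2) ^ n := by
  classical
  have span_eq : Submodule.span R (Set.range (permMonomial R A (n := n))) = Submodule.span R
      (Set.range fun τ : {τ : Perm (Fin n) // AvoidsDecreasing d τ} => permMonomial R A τ.1) := by
    refine le_antisymm (Submodule.span_le.2 ?_) (Submodule.span_mono ?_)
    · rintro _ ⟨σ, rfl⟩
      exact permMonomial_mem_span_avoidsDecreasing hunit hγ σ
    · rintro _ ⟨τ, rfl⟩
      exact ⟨τ, rfl⟩
  calc codimension R A n
      = (Set.range fun τ : {τ : Perm (Fin n) // AvoidsDecreasing d τ} =>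
          permMonomial R A τ.1).finrank R := by rw [codimension, Set.finrank, span_eq, Set.finrank]
    _ ≤ Nat.card {τ : Perm (Fin n) // AvoidsDecreasing d τ} := by
        rw [Nat.card_eq_fintype_card]; exact finrank_range_le_card _
    _ ≤ (d ^ 2) ^ n := by simpa using card_avoidsDecreasing_le (Fin n) d

theorem exists_codimension_le_pow {F A : Type*} [Field F] [Ring A] [Algebra F A]
    (hA : SatisfiesNonzeroPI F A) : ∃ K : ℕ, ∀ n, codimension F A n ≤ K ^ n := by
  obtain ⟨f, hf, hvanish⟩ := hA
  obtain ⟨d, γ, hone, hγ⟩ := exists_multilinear_identity hf hvanish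
  exact ⟨d ^ 2, codimension_le_pow hone.isUnit hγ⟩

end CodimensionGrowth

section TensorProduct

lemma finrank_span_range_tmul_le {F V W ι : Type*} [Field F] [AddCommGroup V] [Module F V]
    [AddCommGroup W] [Module F W] [Finite ι] (v : ι → V) (w : ι → W) :
    (Set.range fun i => v i ⊗ₜ[F] w i).finrank F ≤
      (Set.range v).finrank F * (Set.range w).finrank F := by
  let S := Submodule.span F (Set.range v)
  let T := Submodule.span F (Set.range w)
  have : FiniteDimensional F S := FiniteDimensional.span_of_finite F (Set.finite_range v)
  have : FiniteDimensional F T := FiniteDimensional.span_of_finite F (Set.finite_range w)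
  have hle : Submodule.span F (Set.range fun i => v i ⊗ₜ[F] w i) ≤
      LinearMap.range (TensorProduct.mapIncl S T) := by
    rw [Submodule.span_le]
    rintro _ ⟨i, rfl⟩
    exact ⟨⟨v i, Submodule.subset_span ⟨i, rfl⟩⟩ ⊗ₜ ⟨w i, Submodule.subset_span ⟨i, rfl⟩⟩, rfl⟩
  calc (Set.range fun i => v i ⊗ₜ[F] w i).finrank F
      ≤ finrank F (LinearMap.range (TensorProduct.mapIncl S T)) := Submodule.finrank_mono hle
    _ ≤ finrank F (S ⊗[F] T) := LinearMap.finrank_range_le _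
    _ = (Set.range v).finrank F * (Set.range w).finrank F := finrank_tensorProduct

lemma finrank_span_range_le_mul {F U V W E ι : Type*} [Field F] [AddCommGroup U] [Module F U]
    [AddCommGroup V] [Module F V] [AddCommGroup W] [Module F W] [AddCommGroup E] [Module F E]
    [Finite ι] {u : ι → U} {v : ι → V} {w : ι → W} {e : U →ₗ[F] E} (he : Function.Injective e)
    (φ : V ⊗[F] W →ₗ[F] E) (h : ∀ i, e (u i) = φ (v i ⊗ₜ w i)) :
    (Set.range u).finrank F ≤ (Set.range v).finrank F * (Set.range w).finrank F := by
  let S := Submodule.span F (Set.range u)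
  let T := Submodule.span F (Set.range fun i => v i ⊗ₜ[F] w i)
  have : FiniteDimensional F T := FiniteDimensional.span_of_finite F (Set.finite_range _)
  have map_eq : S.map e = T.map φ := by
    simp only [S, T, Submodule.map_span, ← Set.range_comp, Function.comp_def, h]
  calc (Set.range u).finrank F
      = finrank F (S.map e) := (S.equivMapOfInjective e he).finrank_eq
    _ = finrank F (T.map φ) := by rw [map_eq]
    _ ≤ finrank F T := Submodule.finrank_map_le φ T
    _ ≤ (Set.range v).finrank F * (Set.range w).finrank F := finrank_span_range_tmul_le v w

variable (R A B : Type*) [CommSemiring R] [Semiring A] [Algebra R A] [Semiring B] [Algebra R B]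
  (n : ℕ)

/-- Restriction of an `n`-linear map on `A ⊗ B` to tuples of pure tensors; by multilinearity it
loses no information. -/
def evalPureTensors : MultilinearMap R (fun _ : Fin n => A ⊗[R] B) (A ⊗[R] B) →ₗ[R]
    ((Fin n → A) × (Fin n → B) → A ⊗[R] B) where
  toFun φ x := φ fun i => x.1 i ⊗ₜ x.2 i
  map_add' _ _ := rfl
  map_smul' _ _ := rfl

/-- The function `(a, b) ↦ φ a ⊗ ψ b` attached to a tensor `φ ⊗ ψ` of `n`-linear maps. -/
def evalTensor : MultilinearMap R (fun _ : Fin n => A) A ⊗[R]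
      MultilinearMap R (fun _ : Fin n => B) B →ₗ[R] ((Fin n → A) × (Fin n → B) → A ⊗[R] B) :=
  LinearMap.pi fun x => TensorProduct.map
    { toFun := fun φ => φ x.1, map_add' := fun _ _ => rfl, map_smul' := fun _ _ => rfl }
    { toFun := fun φ => φ x.2, map_add' := fun _ _ => rfl, map_smul' := fun _ _ => rfl }

variable {R A B n}

lemma evalPureTensors_injective : Function.Injective (evalPureTensors R A B n) := by
  intro φ ψ h
  refine MultilinearMap.ext_of_span_eq_top (g := fun _ (x : A × B) => x.1 ⊗ₜ x.2) (fun _ => ?_)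
    fun x => congrFun h (fun i => (x i).1, fun i => (x i).2)
  rw [← TensorProduct.span_tmul_eq_top]
  exact congrArg _ (Set.ext fun t => by simp)

lemma prod_ofFn_tmul (a : Fin n → A) (b : Fin n → B) :
    (List.ofFn fun i => a i ⊗ₜ[R] b i).prod = (List.ofFn a).prod ⊗ₜ (List.ofFn b).prod := by
  induction n with
  | zero => simp [Algebra.TensorProduct.one_def]
  | succ n ih => simp [ih]

lemma evalPureTensors_permMonomial (σ : Perm (Fin n)) :
    evalPureTensors R A B n (permMonomial R (A ⊗[R] B) σ) =
      evalTensor R A B n (permMonomial R A σ ⊗ₜ permMonomial R B σ) :=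
  funext fun x => prod_ofFn_tmul (x.1 ∘ σ) (x.2 ∘ σ)

theorem codimension_tensorProduct_le (F A B : Type*) [Field F] [Ring A] [Algebra F A] [Ring B]
    [Algebra F B] (n : ℕ) :
    codimension F (A ⊗[F] B) n ≤ codimension F A n * codimension F B n :=
  finrank_span_range_le_mul evalPureTensors_injective (evalTensor F A B n)
    evalPureTensors_permMonomial

end TensorProduct

section FactorialBound

lemma linearIndependent_freeAlgebra_words (R : Type*) [CommSemiring R] (n : ℕ) :
    LinearIndependent R fun σ : Perm (Fin n) =>
      (List.ofFn fun i => FreeAlgebra.ι R (σ i : ℕ)).prod := by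
  let word (σ : Perm (Fin n)) : FreeMonoid ℕ := .ofList (List.ofFn fun i => (σ i : ℕ))
  have word_injective : Function.Injective word := fun σ τ h =>
    Equiv.ext fun i => Fin.ext (congrFun (List.ofFn_injective (FreeMonoid.ofList.injective h)) i)
  convert (FreeAlgebra.basisFreeMonoid R ℕ).linearIndependent.comp word word_injective
    using 2 with σ
  have lift_ι : FreeAlgebra.lift R (FreeAlgebra.ι R) = AlgHom.id R (FreeAlgebra R ℕ) :=
    FreeAlgebra.hom_ext (FreeAlgebra.ι_comp_lift _)
  simpa [word, Function.comp_def, lift_ι] using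
    (lift_basisFreeMonoid (R := R) (FreeAlgebra.ι R) (word σ)).symm

theorem satisfiesNonzeroPI_of_codimension_lt_factorial {F R : Type*} [Field F] [Ring R]
    [Algebra F R] {n : ℕ} (h : codimension F R n < n.factorial) : SatisfiesNonzeroPI F R := by
  have hdep : ¬ LinearIndependent F (permMonomial F R (n := n)) := by
    rw [linearIndependent_iff_card_eq_finrank_span, Fintype.card_perm, Fintype.card_fin]
    exact h.ne'
  obtain ⟨γ, hγ, σ, hσ⟩ := Fintype.not_linearIndependent_iff.1 hdep
  refine ⟨∑ σ, γ σ • (List.ofFn fun i => FreeAlgebra.ι F (σ i : ℕ)).prod, fun h0 => ?_, fun a => ?_⟩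
  · exact hσ (Fintype.linearIndependent_iff.1 (linearIndependent_freeAlgebra_words F n) γ h0 σ)
  · have := DFunLike.congr_fun hγ fun i : Fin n => a i
    simpa [permMonomial_apply, Function.comp_def, map_list_prod] using this

end FactorialBound

end Regev

/-- **Regev's theorem.** If the `F`-algebras `A` and `B` each satisfy a nonzero polynomial
identity, then so does their tensor product `A ⊗[F] B`. -/
theorem regev_tensor_product (F : Type*) [Field F]
    (A : Type*) [Ring A] [Algebra F A] (B : Type*) [Ring B] [Algebra F B]
    (hA : SatisfiesNonzeroPI F A) (hB : SatisfiesNonzeroPI F B) :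
    SatisfiesNonzeroPI F (A ⊗[F] B) := by
  obtain ⟨K, hK⟩ := Regev.exists_codimension_le_pow hA
  obtain ⟨L, hL⟩ := Regev.exists_codimension_le_pow hB
  obtain ⟨n, hn⟩ := (Nat.eventually_pow_lt_factorial_sub (K * L) 0).exists
  apply Regev.satisfiesNonzeroPI_of_codimension_lt_factorial (n := n)
  calc Regev.codimension F (A ⊗[F] B) n
      ≤ Regev.codimension F A n * Regev.codimension F B n :=
        Regev.codimension_tensorProduct_le F A B n
    _ ≤ K ^ n * L ^ n := Nat.mul_le_mul (hK n) (hL n)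
    _ = (K * L) ^ n := (mul_pow K L n).symm
    _ < n.factorial := hn
end
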